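/- For all positive integers n, k, D, b there is a constant C = C(n,k,D,b) with the following property: if T is a finite set of hypersurfaces of ℝ^n each of degree at most D, and S is a finite set of points of ℝ^n that is (k,b)-free with respect to T, then ℐ(S,T) ≤ C·(|S|^{α_k(n)}·|T|^{β_k(n)} + |T| + |S|). -/

import Mathlib

open MvPolynomial Set

noncomputable section

namespace Paper

variable (n : ℕ)

/-- The zero locus in `ℂⁿ` of a set of polynomials. -/
def zeroLocus (I : Set (MvPolynomial (Fin n) ℂ)) : Set (Fin n → ℂ) :=
  {x | ∀ f ∈ I, eval x f = 0}

/-- A subset of `ℂⁿ` is algebraic if it is the zero locus of a set of polynomials. -/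
def IsAlgebraicSet (V : Set (Fin n → ℂ)) : Prop :=
  ∃ I : Set (MvPolynomial (Fin n) ℂ), V = zeroLocus n I

/-- An irreducible (affine) variety in `ℂⁿ`: a nonempty algebraic set that is not covered
by two algebraic sets unless it is contained in one of them. -/
def IsIrredVariety (V : Set (Fin n → ℂ)) : Prop :=
  IsAlgebraicSet n V ∧ V.Nonempty ∧
    ∀ V₁ V₂ : Set (Fin n → ℂ), IsAlgebraicSet n V₁ → IsAlgebraicSet n V₂ →
      V ⊆ V₁ ∪ V₂ → V ⊆ V₁ ∨ V ⊆ V₂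

/-- There is a strictly increasing chain of `d + 1` irreducible varieties inside `V`. -/
def HasChain (V : Set (Fin n → ℂ)) (d : ℕ) : Prop :=
  ∃ W : Fin (d + 1) → Set (Fin n → ℂ),
    (∀ i, IsIrredVariety n (W i)) ∧ (∀ i j : Fin (d + 1), i < j → W i ⊂ W j) ∧
      W (Fin.last d) ⊆ V

/-- The (Krull) dimension of a subset of `ℂⁿ`, as the length of the longest chain of
irreducible subvarieties. -/
def dim (V : Set (Fin n → ℂ)) : ℕ := sSup {d | HasChain n V d}

/-- `W` is an irreducible component of `X`: an irreducible subvariety that is maximal among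
irreducible subvarieties of `X`. -/
def IsIrredComponent (W X : Set (Fin n → ℂ)) : Prop :=
  IsIrredVariety n W ∧ W ⊆ X ∧
    ∀ W', IsIrredVariety n W' → W ⊆ W' → W' ⊆ X → W' = W

/-- The degree of an irreducible variety `V ⊆ ℂⁿ` of dimension `d` (i.e. the degree of its
projective closure): the largest finite number of points in which an affine-linear subspace of
dimension `n - d` meets `V`. -/
def degree (V : Set (Fin n → ℂ)) : ℕ :=
  sSup { m | ∃ L : AffineSubspace ℂ (Fin n → ℂ),
    Module.finrank ℂ L.direction = n - dim n V ∧ (V ∩ ↑L).Finite ∧ (V ∩ ↑L).ncard = m }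

/-- The degree of an algebraic set: the sum of the degrees of its irreducible components. -/
def degreeSum (X : Set (Fin n → ℂ)) : ℕ :=
  ∑ᶠ W ∈ {W | IsIrredComponent n W X}, degree n W

/-- The maximal dimension of an irreducible component of `X` containing `V` equals `e`. -/
def MaxCompDimEq (X V : Set (Fin n → ℂ)) (e : ℕ) : Prop :=
  (∃ W, IsIrredComponent n W X ∧ V ⊆ W ∧ dim n W = e) ∧
    ∀ W, IsIrredComponent n W X → V ⊆ W → dim n W ≤ e

/-- The partial degrees `δ_i(V)` of an irreducible variety `V`:  the minimal `δ` such that there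
are polynomials of degree at most `δ` cutting out an algebraic set containing `V` whose
irreducible components containing `V` have maximal dimension `n - i`.  By convention
`δ_0(V) = 0`. -/
def partialDeg (V : Set (Fin n → ℂ)) (i : ℕ) : ℕ :=
  if i = 0 then 0
  else sInf { δ | ∃ I : Finset (MvPolynomial (Fin n) ℂ),
    (∀ f ∈ I, f.totalDegree ≤ δ) ∧ V ⊆ zeroLocus n ↑I ∧
      MaxCompDimEq n (zeroLocus n ↑I) V (n - i) }

/-- The partial degrees as extended naturals, with the convention `δ_i(V) = ∞` for
`i > n - dim V`. -/
def partialDegE (V : Set (Fin n → ℂ)) (i : ℕ) : ℕ∞ :=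
  if i ≤ n - dim n V then (partialDeg n V i : ℕ∞) else ⊤

/-- `δ(V)` for an irreducible variety `V`: the minimal `δ` such that `V` is an irreducible
component of the zero set of a finite family of polynomials of degree at most `δ`. -/
def deltaIrr (V : Set (Fin n → ℂ)) : ℕ :=
  sInf { δ | ∃ I : Finset (MvPolynomial (Fin n) ℂ),
    (∀ f ∈ I, f.totalDegree ≤ δ) ∧ IsIrredComponent n V (zeroLocus n ↑I) }

/-- `δ(V)` for a general algebraic set `V`: the minimal `δ` such that every irreducible
component of `V` is an irreducible component of the zero set of a finite family of polynomials
of degree at most `δ`. -/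
def deltaSet (V : Set (Fin n → ℂ)) : ℕ :=
  sInf { δ | ∃ I : Finset (MvPolynomial (Fin n) ℂ),
    (∀ f ∈ I, f.totalDegree ≤ δ) ∧
      ∀ W, IsIrredComponent n W V → IsIrredComponent n W (zeroLocus n ↑I) }

/-- An algebraic set all of whose irreducible components have dimension `d`. -/
def IsAlgSetOfDim (V : Set (Fin n → ℂ)) (d : ℕ) : Prop :=
  IsAlgebraicSet n V ∧ V.Nonempty ∧ ∀ W, IsIrredComponent n W V → dim n W = d

/-- `Δ_i(V) = max (deg V / (δ_{i+1}(V) ⋯ δ_{n-d}(V))) 1`. -/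
def Delta (V : Set (Fin n → ℂ)) (i : ℕ) : ℝ :=
  max ((degree n V : ℝ) / ∏ j ∈ Finset.Icc (i + 1) (n - dim n V), (partialDeg n V j : ℝ)) 1

/-- `i` is admissible with respect to `V` if `δ_{i+1}(V) > 2 i δ_i(V)` (with the convention
`δ_i(V) = ∞` for `i > n - dim V`). -/
def Admissible (V : Set (Fin n → ℂ)) (i : ℕ) : Prop :=
  ((2 * i : ℕ) : ℕ∞) * partialDegE n V i < partialDegE n V (i + 1)

/-- The interval `ℛ_i(V) = [c₁ δ_i(V)^{n-i} Δ_i(V), (c₀/2) δ_{i+1}(V)^{n-i} Δ_i(V)]`,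
where `δ_{n-d+1}(V) = ∞` makes the last interval a half-line. -/
def RSet (c0 c1 : ℝ) (V : Set (Fin n → ℂ)) (i : ℕ) : Set ℝ :=
  if i = n - dim n V then
    Set.Ici (c1 * (partialDeg n V i : ℝ) ^ (n - i) * Delta n V i)
  else
    Set.Icc (c1 * (partialDeg n V i : ℝ) ^ (n - i) * Delta n V i)
      ((c0 / 2) * (partialDeg n V (i + 1) : ℝ) ^ (n - i) * Delta n V i)

/-- The interval `ℛ^l_{s,τ}(V) = [τ δ_s(V)^{n-(s+l)} Δ_s(V), τ δ_{s+1}(V)^{n-(s+l)} Δ_s(V)]`,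
where `δ_{n-d+1}(V) = ∞` makes the last interval a half-line. -/
def RlSet (τ : ℝ) (l : ℕ) (V : Set (Fin n → ℂ)) (s : ℕ) : Set ℝ :=
  if s = n - dim n V then
    Set.Ici (τ * (partialDeg n V s : ℝ) ^ (n - (s + l)) * Delta n V s)
  else
    Set.Icc (τ * (partialDeg n V s : ℝ) ^ (n - (s + l)) * Delta n V s)
      (τ * (partialDeg n V (s + 1) : ℝ) ^ (n - (s + l)) * Delta n V s)

/-- The ideal `I(V)` of polynomials vanishing on `V ⊆ ℂⁿ`. -/
def vanishingIdeal (V : Set (Fin n → ℂ)) : Ideal (MvPolynomial (Fin n) ℂ) where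
  carrier := {f | ∀ x ∈ V, eval x f = 0}
  add_mem' := by
    intro a b ha hb x hx
    simp [ha x hx, hb x hx]
  zero_mem' := by
    intro x hx
    simp
  smul_mem' := by
    intro c f hf x hx
    simp [smul_eq_mul, hf x hx]

/-- The ideal `I_ℝ(V)` of real polynomials vanishing on `V ⊆ ℂⁿ`. -/
def vanishingIdealR (V : Set (Fin n → ℂ)) : Ideal (MvPolynomial (Fin n) ℝ) :=
  (vanishingIdeal n V).comap (MvPolynomial.map (algebraMap ℝ ℂ))

/-- The affine Hilbert function `H_{I(V)}(m) = dim_ℂ ℂ[x]_{≤ m} / I(V)_{≤ m}`, realised as the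
dimension of the image of the space of polynomials of total degree at most `m` in the quotient
ring `ℂ[x]/I(V)`. -/
def hilbert (V : Set (Fin n → ℂ)) (m : ℕ) : ℕ :=
  Module.finrank ℂ
    (Submodule.map (Ideal.Quotient.mkₐ ℂ (vanishingIdeal n V)).toLinearMap
      (restrictTotalDegree (Fin n) ℂ m))

/-- The real affine Hilbert function `H_{I(V),ℝ}(m) = dim_ℝ ℝ[x]_{≤ m} / I_ℝ(V)_{≤ m}`. -/
def hilbertR (V : Set (Fin n → ℂ)) (m : ℕ) : ℕ :=
  Module.finrank ℝ
    (Submodule.map (Ideal.Quotient.mkₐ ℝ (vanishingIdealR n V)).toLinearMap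
      (restrictTotalDegree (Fin n) ℝ m))

/-- The inclusion `ℝⁿ → ℂⁿ`. -/
def toC (x : Fin n → ℝ) : Fin n → ℂ := fun i => (x i : ℂ)

/-- The set of real points of `V ⊆ ℂⁿ`. -/
def realPts (V : Set (Fin n → ℂ)) : Set (Fin n → ℝ) := {x | toC n x ∈ V}

/-- The real zero set of a real polynomial. -/
def zeroSetR (g : MvPolynomial (Fin n) ℝ) : Set (Fin n → ℝ) := {x | eval x g = 0}

/-- The zero locus of the polynomials `P 1, …, P i` (the first `i` members of a tuple of
polynomials indexed from `1`). -/
def zeroLocusUpTo (P : ℕ → MvPolynomial (Fin n) ℂ) (i : ℕ) : Set (Fin n → ℂ) :=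
  zeroLocus n {f | ∃ j : ℕ, 1 ≤ j ∧ j ≤ i ∧ f = P j}

/-- `V'` is an `(n-s)`-minimal variety of the irreducible variety `V`. -/
def IsMinimalVariety (V V' : Set (Fin n → ℂ)) (s : ℕ) : Prop :=
  IsIrredVariety n V' ∧ V ⊆ V' ∧ dim n V' = n - s ∧
    ∀ f ∈ vanishingIdeal n V, f ∉ vanishingIdeal n V' →
      partialDegE n V (s + 1) ≤ (f.totalDegree : ℕ∞)

/-- `S` is `(k,b)`-free with respect to `T`, for the incidence relation `R`. -/
def KBFree {α β : Type*} (R : α → β → Prop) (S : Finset α) (T : Finset β) (k b : ℕ) : Prop :=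
  ¬ ∃ (P : Finset α) (B : Finset β), P ⊆ S ∧ B ⊆ T ∧ P.card = k ∧ B.card = b ∧
      ∀ s ∈ P, ∀ t ∈ B, R s t

/-- The number of incidences between a finite set of points and a finite family of sets. -/
def incCountAbs {α : Type*} (S : Finset α) (T : Finset (Set α)) : ℕ :=
  ∑ t ∈ T, (↑S ∩ t).ncard

/-- The number of incidences between a finite set of real points and a finite family of
subsets of `ℂⁿ`. -/
def incCount (S : Finset (Fin n → ℝ)) (T : Finset (Set (Fin n → ℂ))) : ℕ :=
  ∑ t ∈ T, (↑S ∩ toC n ⁻¹' t).ncard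

/-- The total degree `deg T = ∑_{t ∈ T} deg t` of a finite family of algebraic sets. -/
def degFamily (T : Finset (Set (Fin n → ℂ))) : ℕ := ∑ t ∈ T, degreeSum n t

/-- The total degree of a finite family of irreducible varieties. -/
def degFamilyIrred (T : Finset (Set (Fin n → ℂ))) : ℕ := ∑ t ∈ T, degree n t

/-- `α_k(d)`. -/
def alpha (k d : ℕ) : ℝ :=
  if k = 1 ∧ d = 1 then 0 else (k : ℝ) * ((d : ℝ) - 1) / ((d : ℝ) * (k : ℝ) - 1)

/-- `β_k(d)`. -/
def beta (k d : ℕ) : ℝ :=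
  if k = 1 ∧ d = 1 then 1 else (d : ℝ) * ((k : ℝ) - 1) / ((d : ℝ) * (k : ℝ) - 1)

/-- `τ_d(b,k) = b^{1-β_k(d)} k^{1-α_k(d)}`. -/
def tauC (d b k : ℕ) : ℝ := (b : ℝ) ^ (1 - beta k d) * (k : ℝ) ^ (1 - alpha k d)

/-- The Chardin–Philippon property of the constant `c₀`: for every pure-dimensional algebraic
set `W ⊆ ℂⁿ` and every `m ≥ 2 (n - dim W) δ(W)` one has `H_{I(W)}(m) ≥ c₀ m^{dim W} deg W`. -/
def ChardinPhilippon (c0 : ℝ) : Prop :=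
  ∀ (W : Set (Fin n → ℂ)) (e : ℕ), IsAlgSetOfDim n W e →
    ∀ m : ℕ, 2 * (n - e) * deltaSet n W ≤ m →
      c0 * (m : ℝ) ^ e * (degreeSum n W : ℝ) ≤ (hilbert n W m : ℝ)

/-- The defining property of the constant `c₁`: for every irreducible variety `V`, every
positive integer lies in some interval `ℛ_i(V)` with `i` admissible with respect to `V`. -/
def CoversPositiveIntegers (c0 c1 : ℝ) : Prop :=
  ∀ V : Set (Fin n → ℂ), IsIrredVariety n V →
    ∀ m : ℕ, 0 < m → ∃ i, Admissible n V i ∧ (m : ℝ) ∈ RSet n c0 c1 V i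

/-- `i_V(M)`: the smallest admissible `i` such that `M^{n-i} Δ_i(V) ∈ ℛ_i(V)`. -/
def iV (c0 c1 : ℝ) (V : Set (Fin n → ℂ)) (M : ℕ) : ℕ :=
  sInf {i | Admissible n V i ∧ (M : ℝ) ^ (n - i) * Delta n V i ∈ RSet n c0 c1 V i}

/-- A real polynomial bisects a finite set `S ⊆ ℝⁿ` if it is positive on at most half of `S`
and negative on at most half of `S`. -/
def Bisects (g : MvPolynomial (Fin n) ℝ) (S : Finset (Fin n → ℝ)) : Prop :=
  ((↑S ∩ {x | 0 < eval x g}).ncard : ℝ) ≤ (S.card : ℝ) / 2 ∧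
    ((↑S ∩ {x | eval x g < 0}).ncard : ℝ) ≤ (S.card : ℝ) / 2

/-- The set of `r`-rich points of a family `T`: points lying in at least `r` members of `T`. -/
def richPts (T : Finset (Set (Fin n → ℂ))) (r : ℕ) : Set (Fin n → ℂ) :=
  {x | r ≤ ({t | t ∈ T ∧ x ∈ t} : Set (Set (Fin n → ℂ))).ncard}

/-- A real hypersurface of degree at most `D`: the real zero set of a nonzero real polynomial
of degree at most `D`. -/
def IsRealHypersurfaceDegLE (t : Set (Fin n → ℝ)) (D : ℕ) : Prop :=
  ∃ p : MvPolynomial (Fin n) ℝ, p ≠ 0 ∧ t = zeroSetR n p ∧ p.totalDegree ≤ D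

/-- Lexicographic comparison of the tuples `(f 1, …, f m)` and `(g 1, …, g m)`. -/
def LexLE (m : ℕ) (f g : ℕ → ℕ) : Prop :=
  (∀ j ∈ Finset.Icc 1 m, f j = g j) ∨
    ∃ i ∈ Finset.Icc 1 m, (∀ j, 1 ≤ j → j < i → f j = g j) ∧ f i < g i

/-!
The points are first moved slightly so that they lie in general position. A hypersurface `p = 0`
is replaced by the region `f < 0` with `f = M * p ^ 2 - 1`, where `M` is so large that `f > 1` at
the points off the hypersurface; strict inequalities survive the motion, and neither
multiplicities nor irreducible components play a role any more.

A partitioning polynomial is a product of interpolants of random samples of the points. In general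
position the signs of an interpolant through `B \ {x, y}` at `x` and `y` are tied by a linear
relation between the values on `B`, which holds for all polynomials of the interpolating space;
on average this makes the interpolants separate a fixed proportion of the pairs of points. After
enough factors, with total degree `O(P ^ (1 / n))`, half of the points lie in cells with
`O(|S| / P)` points each.

Cells are counted by nondegenerate critical points of a perturbed polynomial, of which there are at
most as many as dimension counting (a weak Bézout bound) allows. In a cell that meets both `f < 0`
and `f > 1` the function `f` takes every value in between, so removing `q ≈ P ^ (1 / n)` level sets
of `f` cuts the cell into more than `q` pieces. There are only `O(P)` pieces in all, hence at most
`O(P ^ (1 - 1 / n))` cells are crossed by any given region.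

The Kővári–Sós–Turán bound inside the cells, with `P` chosen to balance the terms, handles half of
the points; the remaining half is handled in the same way, and the losses form a geometric series.
-/

section NondegenerateZeros

variable {ι K : Type*}

lemma finrank_restrictDegree [Fintype ι] [Field K] (N : ℕ) :
    Module.finrank K (restrictDegree ι K N) = (N + 1) ^ Fintype.card ι := by
  let e : {s : ι →₀ ℕ | ∀ i, s i ≤ N} ≃ (ι → {m : ℕ // m ≤ N}) :=
    (Finsupp.equivFunOnFinite.subtypeEquiv fun _ => Iff.rfl).trans
      (Equiv.subtypePiEquivPi (p := fun _ m => m ≤ N))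
  have hN : Nat.card {m : ℕ // m ≤ N} = N + 1 := by
    simpa [Nat.lt_succ_iff] using Nat.card_congr (Fin.equivSubtype (n := N + 1)).symm
  rw [restrictDegree, Module.finrank_eq_nat_card_basis (basisRestrictSupport K _),
    Nat.card_congr e, Nat.card_pi, Finset.prod_const, hN, Finset.card_univ]

instance finite_restrictDegree [Finite ι] [Field K] (N : ℕ) :
    Module.Finite K (restrictDegree ι K N) := by
  cases nonempty_fintype ι
  refine FiniteDimensional.of_finrank_pos ?_
  rw [finrank_restrictDegree]
  positivity

lemma totalDegree_le_of_mem_restrictDegree [Fintype ι] [CommSemiring K] {N : ℕ}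
    {p : MvPolynomial ι K} (hp : p ∈ restrictDegree ι K N) :
    p.totalDegree ≤ Fintype.card ι * N := by
  refine Finset.sup_le fun s hs => ?_
  rw [Finsupp.sum_fintype _ _ fun _ => rfl, ← smul_eq_mul]
  exact Finset.sum_le_card_nsmul _ _ _ fun i _ => (mem_restrictDegree _ _ _).mp hp s hs i

lemma totalDegree_aeval_le {κ : Type*} [CommSemiring K] {f : ι → MvPolynomial κ K} {e : ℕ}
    (he : ∀ i, (f i).totalDegree ≤ e) (p : MvPolynomial ι K) :
    (aeval f p).totalDegree ≤ p.totalDegree * e := by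
  rw [aeval_def, eval₂_eq]
  refine (totalDegree_finsetSum _ _).trans (Finset.sup_le fun s hs => ?_)
  calc _ ≤ 0 + ∑ i ∈ s.support, s i * e := by
        refine (totalDegree_mul _ _).trans (add_le_add (totalDegree_C _).le ?_)
        refine (totalDegree_finsetProd _ _).trans (Finset.sum_le_sum fun i _ => ?_)
        exact (totalDegree_pow _ _).trans (Nat.mul_le_mul_left _ (he i))
    _ ≤ p.totalDegree * e := by
        rw [zero_add, ← Finset.sum_mul]
        exact Nat.mul_le_mul_right _ (le_totalDegree hs)

lemma exists_eval_eq_one_and_eval_eq_zero [Field K] (Z : Finset (ι → K)) (z : ι → K) :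
    ∃ q : MvPolynomial ι K, eval z q = 1 ∧ ∀ z' ∈ Z, z' ≠ z → eval z' q = 0 := by
  have hsep (z' : ι → K) :
      ∃ q : MvPolynomial ι K, eval z q = 1 ∧ (z' ≠ z → eval z' q = 0) := by
    by_cases hz : z' = z
    · exact ⟨1, map_one _, fun h => absurd hz h⟩
    · obtain ⟨i, hi⟩ := Function.ne_iff.mp hz
      refine ⟨C (z i - z' i)⁻¹ * (X i - C (z' i)), ?_, fun _ => by simp⟩
      simpa using inv_mul_cancel₀ (sub_ne_zero.mpr (Ne.symm hi))
  choose q hq₁ hq₀ using hsep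
  refine ⟨∏ z' ∈ Z, q z', by simp [map_prod, hq₁], fun z' hz' hne => ?_⟩
  rw [map_prod]
  exact Finset.prod_eq_zero hz' (hq₀ z' hne)

/-- The restriction of a polynomial to the line `t ↦ z + t v`, as a polynomial in `t`. -/
def restrictLine [CommSemiring K] (z v : ι → K) : MvPolynomial ι K →ₐ[K] Polynomial K :=
  aeval fun i => Polynomial.C (z i) + Polynomial.C (v i) * Polynomial.X

lemma coeff_zero_restrictLine [CommSemiring K] (z v : ι → K) (p : MvPolynomial ι K) :
    (restrictLine z v p).coeff 0 = eval z p := by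
  induction p using MvPolynomial.induction_on with
  | C a => simp [restrictLine]
  | add p q hp hq => simp [hp, hq]
  | mul_X p i hp => rw [map_mul, Polynomial.mul_coeff_zero, hp]; simp [restrictLine]

lemma coeff_one_restrictLine [Fintype ι] [CommSemiring K] (z v : ι → K) (p : MvPolynomial ι K) :
    (restrictLine z v p).coeff 1 = ∑ j, eval z (pderiv j p) * v j := by
  classical
  induction p using MvPolynomial.induction_on with
  | C a => simp [restrictLine]
  | add p q hp hq => simp [hp, hq, add_mul, Finset.sum_add_distrib]
  | mul_X p i hp =>
    rw [map_mul, Polynomial.mul_coeff_one, hp, coeff_zero_restrictLine]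
    simp only [restrictLine, aeval_X, Polynomial.coeff_add, Polynomial.coeff_C_zero,
      Polynomial.coeff_mul_X_zero, add_zero, Polynomial.coeff_C_succ, Polynomial.coeff_mul_X,
      zero_add, Derivation.leibniz, pderiv_X, smul_eq_mul, map_add, map_mul, eval_X, add_mul,
      Finset.sum_add_distrib, Finset.sum_mul]
    simp [Pi.single_apply, apply_ite, mul_comm, mul_left_comm]

lemma aeval_X_mul_of_isHomogeneous [CommSemiring K] (h : ι → Polynomial K)
    {p : MvPolynomial ι K} {d : ℕ} (hp : p.IsHomogeneous d) :
    aeval (fun i => Polynomial.X * h i) p = Polynomial.X ^ d * aeval h p := by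
  simp only [aeval_def, eval₂_eq, Finset.mul_sum]
  refine Finset.sum_congr rfl fun s hs => ?_
  have hs : ∑ i ∈ s.support, s i = d := hp.degree_eq_sum_deg_support hs |>.symm
  rw [← hs]
  simp only [mul_pow, Finset.prod_mul_distrib, Finset.prod_pow_eq_pow_sum]
  ring

lemma coeff_mul_aeval_X_mul [CommSemiring K] (g : Polynomial K) (h : ι → Polynomial K)
    {p : MvPolynomial ι K} {j : ℕ} (hp : ∀ i < j, homogeneousComponent i p = 0) :
    (g * aeval (fun i => Polynomial.X * h i) p).coeff j
      = g.coeff 0 * eval (fun i => (h i).coeff 0) (homogeneousComponent j p) := by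
  have hterm (d : ℕ) : (g * aeval (fun i => Polynomial.X * h i) (homogeneousComponent d p)).coeff j
      = if d = j then
          g.coeff 0 * eval (fun i => (h i).coeff 0) (homogeneousComponent j p) else 0 := by
    rw [aeval_X_mul_of_isHomogeneous h (homogeneousComponent_isHomogeneous d p),
      mul_left_comm, Polynomial.coeff_X_pow_mul']
    rcases lt_trichotomy d j with hd | rfl | hd
    · simp [hp d hd, hd.ne]
    · have hev (r : MvPolynomial ι K) :
          (aeval h r).coeff 0 = eval (fun i => (h i).coeff 0) r := by
        have hC : Polynomial.constantCoeff.comp Polynomial.C = RingHom.id K := by ext; simp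
        rw [← Polynomial.constantCoeff_apply, map_aeval, Polynomial.algebraMap_eq, hC]
        rfl
      simp [Polynomial.mul_coeff_zero, hev]
    · simp [hd.not_ge, hd.ne']
  conv_lhs => rw [← sum_homogeneousComponent p]
  rw [map_sum, Finset.mul_sum, Polynomial.finsetSum_coeff, Finset.sum_congr rfl fun d _ => hterm d,
    Finset.sum_ite_eq']
  split_ifs with hj
  · rfl
  · rw [homogeneousComponent_eq_zero _ _ (by simpa using hj), map_zero, mul_zero]

/-- The Jacobian matrix of a square polynomial system at a point. -/
def jacobian [CommSemiring K] (f : ι → MvPolynomial ι K) (z : ι → K) : Matrix ι ι K :=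
  Matrix.of fun i j => eval z (pderiv j (f i))

/-- A nondegenerate zero of a square polynomial system: a common zero at which the Jacobian
determinant does not vanish. -/
def IsNondegenerateZero [Fintype ι] [DecidableEq ι] [CommRing K] (f : ι → MvPolynomial ι K)
    (z : ι → K) : Prop :=
  (∀ i, eval z (f i) = 0) ∧ (jacobian f z).det ≠ 0

variable [Fintype ι] [DecidableEq ι] [Field K] {f : ι → MvPolynomial ι K} {z : ι → K}

lemma IsNondegenerateZero.exists_restrictLine_eq_X_mul (hz : IsNondegenerateZero f z)
    (y : ι → K) :
    ∃ (v : ι → K) (h : ι → Polynomial K), (∀ i, restrictLine z v (f i) = Polynomial.X * h i) ∧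
      ∀ i, (h i).coeff 0 = y i := by
  set v := (jacobian f z)⁻¹.mulVec y
  have hv : (jacobian f z).mulVec v = y := by
    rw [Matrix.mulVec_mulVec, Matrix.mul_nonsing_inv _ hz.2.isUnit, Matrix.one_mulVec]
  have hX (i : ι) : Polynomial.X ∣ restrictLine z v (f i) := by
    rw [Polynomial.X_dvd_iff, coeff_zero_restrictLine, hz.1 i]
  choose h hh using hX
  refine ⟨v, h, hh, fun i => ?_⟩
  rw [← Polynomial.coeff_X_mul, ← hh, zero_add, coeff_one_restrictLine, ← hv]
  rfl

variable [Infinite K] {Z : Finset (ι → K)}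

/- Restricted to a line through `z` along which the system has velocity `y`, the lowest
nonvanishing homogeneous component of `P z` can be read off from the given relation. -/
lemma eq_zero_of_sum_mul_aeval_eq_zero (hf : ∀ z ∈ Z, IsNondegenerateZero f z)
    {q : (ι → K) → MvPolynomial ι K} (hq₁ : ∀ z, eval z (q z) = 1)
    (hq₀ : ∀ z, ∀ z' ∈ Z, z' ≠ z → eval z' (q z) = 0)
    {P : Z → MvPolynomial ι K} (hP : ∑ z : Z, q z * aeval f (P z) = 0) : P = 0 := by
  have hcomp (j : ℕ) : ∀ z, homogeneousComponent j (P z) = 0 := by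
    induction j using Nat.strong_induction_on with
    | _ j ih =>
    refine fun z => MvPolynomial.funext fun y => ?_
    obtain ⟨v, h, hfh, hy⟩ := (hf z z.2).exists_restrictLine_eq_X_mul y
    have hres (p : MvPolynomial ι K) :
        restrictLine z v (aeval f p) = aeval (fun i => Polynomial.X * h i) p := by
      rw [← funext hfh, ← AlgHom.comp_apply, comp_aeval]
    have hterm (z' : Z) : (restrictLine z v (q z' * aeval f (P z'))).coeff j
        = eval z.1 (q z') * eval y (homogeneousComponent j (P z')) := by
      rw [map_mul, hres, coeff_mul_aeval_X_mul _ _ fun i hi => ih i hi z',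
        coeff_zero_restrictLine, funext hy]
    have hsum := congrArg (fun p => (restrictLine z.1 v p).coeff j) hP
    simp only [map_sum, Polynomial.finsetSum_coeff, hterm, map_zero, Polynomial.coeff_zero] at hsum
    rwa [Finset.sum_eq_single z, hq₁, one_mul] at hsum
    · intro z' _ hne
      rw [hq₀ z' z z.2 fun h => hne (Subtype.ext h.symm), zero_mul]
    · simp
  ext1 z
  rw [← sum_homogeneousComponent (P z)]
  exact Finset.sum_eq_zero fun j _ => hcomp j z

theorem card_le_of_isNondegenerateZero {e : ℕ} (he : ∀ i, (f i).totalDegree ≤ e)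
    (hf : ∀ z ∈ Z, IsNondegenerateZero f z) :
    Z.card ≤ (Fintype.card ι * e + 1) ^ Fintype.card ι := by
  classical
  choose q hq₁ hq₀ using exists_eval_eq_one_and_eval_eq_zero Z
  set n := Fintype.card ι
  set M := Z.sup fun z => (q z).totalDegree
  set N := M + n * M * e
  let Φ : (Z → restrictDegree ι K M) →ₗ[K] MvPolynomial ι K :=
    ∑ z : Z, LinearMap.mulLeft K (q z) ∘ₗ (aeval f).toLinearMap ∘ₗ Submodule.subtype _ ∘ₗ
      LinearMap.proj z
  have hΦ (P : Z → restrictDegree ι K M) : Φ P = ∑ z : Z, q z * aeval f (P z).1 := by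
    simp [Φ, LinearMap.sum_apply]
  have hdeg (P : Z → restrictDegree ι K M) : Φ P ∈ restrictDegree ι K N := by
    rw [hΦ]
    refine Submodule.sum_mem _ fun z _ => restrictTotalDegree_le_restrictDegree ι K N ?_
    rw [mem_restrictTotalDegree]
    refine (totalDegree_mul _ _).trans
      (add_le_add (Finset.le_sup (f := fun z => (q z).totalDegree) z.2) ?_)
    exact (totalDegree_aeval_le he _).trans
      (Nat.mul_le_mul_right _ (totalDegree_le_of_mem_restrictDegree (P z).2))
  have hinj : Function.Injective (Φ.codRestrict _ hdeg) := by
    rw [injective_iff_map_eq_zero]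
    intro P hP
    have hP : ∑ z : Z, q z * aeval f (P z).1 = 0 := (hΦ P).symm.trans (congrArg Subtype.val hP)
    ext1 z
    exact Subtype.ext (congrFun (eq_zero_of_sum_mul_aeval_eq_zero hf hq₁ hq₀ hP) z)
  have hrank := LinearMap.finrank_le_finrank_of_injective hinj
  rw [Module.finrank_pi_fintype, Finset.sum_const, finrank_restrictDegree, finrank_restrictDegree,
    Finset.card_univ, Fintype.card_coe, smul_eq_mul] at hrank
  have hN : (N + 1) ^ n ≤ (n * e + 1) ^ n * (M + 1) ^ n := by
    rw [← mul_pow]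
    exact Nat.pow_le_pow_left (by simp only [N]; nlinarith) n
  exact Nat.le_of_mul_le_mul_right (hrank.trans hN) (by positivity)

end NondegenerateZeros

section Cells

variable {ι : Type*}

lemma totalDegree_pderiv_le {R : Type*} [CommSemiring R] (i : ι) (p : MvPolynomial ι R) :
    (pderiv i p).totalDegree ≤ p.totalDegree := by
  conv_lhs => rw [p.as_sum, map_sum]
  refine (totalDegree_finsetSum _ _).trans (Finset.sup_le fun s hs => ?_)
  rw [pderiv_monomial]
  refine (totalDegree_monomial_le _ _).trans (le_trans ?_ (le_totalDegree hs))
  exact Finsupp.degree_mono (tsub_le_self (a := s))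

lemma hasFDerivAt_eval [Fintype ι] (p : MvPolynomial ι ℝ) (x : ι → ℝ) :
    HasFDerivAt (fun x => eval x p)
      (∑ j, eval x (pderiv j p) • (ContinuousLinearMap.proj j : (ι → ℝ) →L[ℝ] ℝ)) x := by
  classical
  induction p using MvPolynomial.induction_on with
  | C a => simpa using hasFDerivAt_const a x
  | add p q hp hq =>
    simp only [map_add, add_smul, Finset.sum_add_distrib]
    exact hp.add hq
  | mul_X p i hp =>
    simp only [map_mul, eval_X]
    refine (hp.mul (hasFDerivAt_apply i x)).congr_fderiv ?_
    ext v
    simp only [add_apply, smul_apply,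
      sum_apply, ContinuousLinearMap.proj_apply, smul_eq_mul,
      Derivation.leibniz, pderiv_X, map_add, map_mul, eval_X, add_mul, Finset.sum_add_distrib,
      Finset.mul_sum]
    simp [Pi.single_apply, apply_ite, mul_assoc]

/- By Sard's theorem `a` can be taken outside the null set of critical values. -/
lemma exists_forall_isNondegenerateZero [Fintype ι] [DecidableEq ι] (F : ι → MvPolynomial ι ℝ)
    {η : ℝ} (hη : 0 < η) :
    ∃ a : ι → ℝ, ‖a‖ < η ∧
      ∀ x, (∀ i, eval x (F i) = a i) → IsNondegenerateZero (fun i => F i - C (a i)) x := by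
  have hderiv (x : ι → ℝ) : HasFDerivAt (fun x i => eval x (F i))
      (jacobian F x).toLin'.toContinuousLinearMap x := by
    refine hasFDerivAt_pi'.mpr fun i => (hasFDerivAt_eval (F i) x).congr_fderiv ?_
    ext v
    simp [jacobian, Matrix.mulVec, dotProduct]
  have hnull := MeasureTheory.addHaar_image_eq_zero_of_det_fderivWithin_eq_zero
    MeasureTheory.volume (s := {x | (jacobian F x).det = 0})
    (fun x _ => (hderiv x).hasFDerivWithinAt) fun x hx => by
      simpa [ContinuousLinearMap.det, LinearMap.det_toLin'] using hx
  obtain ⟨a, ha, hcrit⟩ := Set.not_subset.mp fun hsub : Metric.ball 0 η ⊆ _ =>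
    (Metric.measure_ball_pos MeasureTheory.volume (0 : ι → ℝ) hη).ne'
      (MeasureTheory.measure_mono_null hsub hnull)
  refine ⟨a, mem_ball_zero_iff.mp ha, fun x hx => ⟨fun i => by simp [hx i], fun hdet => ?_⟩⟩
  exact hcrit ⟨x, by simpa [jacobian] using hdet, funext hx⟩

lemma mem_connectedComponentIn_of_mem_closure {X : Type*} [TopologicalSpace X] {U : Set X}
    {z x : X} (hz : z ∈ U) (hx : x ∈ U) (hcl : x ∈ closure (connectedComponentIn U z)) :
    x ∈ connectedComponentIn U z := by
  have hins : IsPreconnected (insert x (connectedComponentIn U z)) :=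
    isPreconnected_connectedComponentIn.subset_closure (subset_insert _ _)
      (insert_subset hcl subset_closure)
  exact hins.subset_connectedComponentIn (mem_insert_of_mem _ (mem_connectedComponentIn hz))
    (insert_subset hx (connectedComponentIn_subset U z)) (mem_insert _ _)

lemma exists_isLocalMax_mem_connectedComponentIn {E : Type*} [PseudoMetricSpace E] [ProperSpace E]
    [LocallyConnectedSpace E] {U : Set E} (hU : IsOpen U) (hb : Bornology.IsBounded U) {w : E → ℝ}
    (hw : Continuous w) {z : E} (hz : z ∈ U) (hfr : ∀ x ∈ frontier U, w x < w z) :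
    ∃ x ∈ connectedComponentIn U z, IsLocalMax w x := by
  have hsub := connectedComponentIn_subset U z
  have hzc : z ∈ connectedComponentIn U z := mem_connectedComponentIn hz
  obtain ⟨x, hx, hmax⟩ := (hb.subset hsub).isCompact_closure.exists_isMaxOn
    ⟨z, subset_closure hzc⟩ hw.continuousOn
  have hxU : x ∈ U := by
    by_contra hxU
    have hxfr : x ∈ frontier U := hU.frontier_eq ▸ ⟨closure_mono hsub hx, hxU⟩
    exact (hfr x hxfr).not_ge (hmax (subset_closure hzc))
  have hxc := mem_connectedComponentIn_of_mem_closure hz hxU hx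
  exact ⟨x, hxc, (hmax.on_subset subset_closure).isLocalMax
    (hU.connectedComponentIn.mem_nhds hxc)⟩

lemma exists_forall_abs_sum_mul_le [Fintype ι] {B : Set (ι → ℝ)} (hB : Bornology.IsBounded B)
    {δ : ℝ} (hδ : 0 < δ) :
    ∃ η > 0, ∀ a : ι → ℝ, ‖a‖ < η → ∀ x ∈ B, |∑ i, a i * x i| ≤ δ := by
  obtain ⟨R, hR, hBR⟩ := hB.exists_pos_norm_le
  refine ⟨δ / ((Fintype.card ι + 1) * R), by positivity, fun a ha x hx => ?_⟩
  calc |∑ i, a i * x i| ≤ ∑ i, |a i * x i| := Finset.abs_sum_le_sum_abs _ _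
    _ ≤ ∑ _i : ι, δ / ((Fintype.card ι + 1) * R) * R := Finset.sum_le_sum fun i _ => by
        rw [abs_mul]
        exact mul_le_mul ((norm_le_pi_norm a i).trans ha.le) ((norm_le_pi_norm x i).trans
          (hBR x hx)) (abs_nonneg _) (by positivity)
    _ = Fintype.card ι / (Fintype.card ι + 1) * δ := by
        simp only [Finset.sum_const, Finset.card_univ, nsmul_eq_mul]
        field_simp
    _ ≤ 1 * δ := by
        gcongr
        exact div_le_one_of_le₀ (by linarith) (by positivity)
    _ = δ := one_mul δ

lemma pos_of_isPreconnected {A : Set (ι → ℝ)} (hA : IsPreconnected A) {g : MvPolynomial ι ℝ}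
    (hg : ∀ x ∈ A, eval x g ≠ 0) {x y : ι → ℝ} (hx : x ∈ A) (hy : y ∈ A) (hpos : 0 < eval x g) :
    0 < eval y g := by
  by_contra! hneg
  obtain ⟨z, hz, hz0⟩ := hA.intermediate_value hy hx g.continuous_eval.continuousOn ⟨hneg, hpos.le⟩
  exact hg z hz hz0

/-- The cell of `x` in the complement of the hypersurface `G = 0`: the connected component of `x`,
empty if `x` lies on the hypersurface. -/
def cell (G : MvPolynomial ι ℝ) (x : ι → ℝ) : Set (ι → ℝ) :=
  connectedComponentIn {y | eval y G ≠ 0} x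

lemma cell_eq_and_pos_iff_of_dvd {g H : MvPolynomial ι ℝ} (hdvd : g ∣ H) {x y : ι → ℝ}
    (hx : eval x H ≠ 0) (hy : eval y H ≠ 0) (hxy : cell H x = cell H y) :
    cell g x = cell g y ∧ (0 < eval x g ↔ 0 < eval y g) := by
  have hg : cell H x ⊆ {z | eval z g ≠ 0} := fun z hz h0 =>
    connectedComponentIn_subset _ _ hz (zero_dvd_iff.mp (h0 ▸ map_dvd (eval z) hdvd))
  have hxm : x ∈ cell H x := mem_connectedComponentIn hx
  have hym : y ∈ cell H x := hxy ▸ mem_connectedComponentIn hy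
  have hconn : IsPreconnected (cell H x) := isPreconnected_connectedComponentIn
  exact ⟨connectedComponentIn_eq (hconn.subset_connectedComponentIn hxm hg hym),
    pos_of_isPreconnected hconn hg hxm hym, pos_of_isPreconnected hconn hg hym hxm⟩

variable [Fintype ι]

lemma eval_pderiv_eq_of_isLocalMax {u : MvPolynomial ι ℝ} {a x : ι → ℝ}
    (hmax : IsLocalMax (fun x => eval x u - ∑ i, a i * x i) x) (i : ι) :
    eval x (pderiv i u) = a i := by
  classical
  set w : MvPolynomial ι ℝ := u - ∑ i, C (a i) * X i with hw
  have hw' : (fun x => eval x u - ∑ i, a i * x i) = fun x => eval x w := by ext; simp [hw]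
  have hzero := (hw' ▸ hmax).hasFDerivAt_eq_zero (hasFDerivAt_eval w x)
  have := congrArg (fun L : (ι → ℝ) →L[ℝ] ℝ => L (Pi.single i 1)) hzero
  simpa [hw, Pi.single_apply, sub_eq_zero, pderiv_X, Derivation.leibniz] using this

/- After a generic small linear perturbation all critical points of `u` are nondegenerate, and
each component of `U` that meets `Z` still contains one, namely a maximum of the perturbed `u`. -/
lemma card_le_of_injOn_connectedComponentIn {u : MvPolynomial ι ℝ} {U : Set (ι → ℝ)}
    (hU : IsOpen U) (hb : Bornology.IsBounded U) (hfr : ∀ x ∈ frontier U, eval x u ≤ 0)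
    {Z : Finset (ι → ℝ)} (hZU : ↑Z ⊆ U) (hZ : ∀ z ∈ Z, 0 < eval z u)
    (hinj : InjOn (connectedComponentIn U) Z) :
    Z.card ≤ (Fintype.card ι * u.totalDegree + 1) ^ Fintype.card ι := by
  classical
  obtain ⟨δ, hδ, hδZ⟩ : ∃ δ > 0, ∀ z ∈ Z, δ ≤ eval z u :=
    Z.eq_empty_or_nonempty.elim (fun h => ⟨1, one_pos, by simp [h]⟩) fun h =>
      (Z.exists_min_image (fun z => eval z u) h).imp' _ fun z hz => ⟨hZ z hz.1, hz.2⟩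
  obtain ⟨η, hη, hsmall⟩ := exists_forall_abs_sum_mul_le hb.closure (δ := δ / 3) (by positivity)
  obtain ⟨a, ha, hreg⟩ := exists_forall_isNondegenerateZero (fun i => pderiv i u) hη
  have hcrit : ∀ z ∈ Z, ∃ x ∈ connectedComponentIn U z, ∀ i, eval x (pderiv i u) = a i := by
    intro z hz
    have hw : Continuous fun x => eval x u - ∑ i, a i * x i :=
      u.continuous_eval.sub (by fun_prop)
    refine (exists_isLocalMax_mem_connectedComponentIn hU hb hw (hZU hz) fun x hx => ?_).imp
      fun x hx => ⟨hx.1, eval_pderiv_eq_of_isLocalMax hx.2⟩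
    have hx' := abs_le.mp (hsmall a ha x (frontier_subset_closure hx))
    have hz' := abs_le.mp (hsmall a ha z (subset_closure (hZU hz)))
    linarith [hx'.1, hz'.2, hfr x hx, hδZ z hz]
  choose! c hc hcrit using hcrit
  have hcinj : InjOn c Z := fun z hz z' hz' h => hinj hz hz' <|
    (connectedComponentIn_eq (hc z hz)).trans (h ▸ (connectedComponentIn_eq (hc z' hz')).symm)
  rw [← Finset.card_image_of_injOn hcinj]
  refine card_le_of_isNondegenerateZero (f := fun i => pderiv i u - C (a i)) (fun i => ?_) ?_
  · exact (totalDegree_sub _ _).trans (max_le (totalDegree_pderiv_le i u) (by simp))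
  · exact Finset.forall_mem_image.mpr fun z hz => hreg _ (hcrit z hz)

lemma card_le_of_injOn_cell {G : MvPolynomial ι ℝ} {Z : Finset (ι → ℝ)}
    (hZ : ∀ z ∈ Z, eval z G ≠ 0) (hinj : InjOn (cell G) Z) :
    Z.card ≤ (Fintype.card ι * (2 * G.totalDegree + 2) + 1) ^ Fintype.card ι := by
  obtain ⟨R, hR⟩ : ∃ R : ℝ, ∀ z ∈ Z, ∑ i, z i ^ 2 < R :=
    (Z.finite_toSet.image fun z => ∑ i, z i ^ 2).bddAbove.imp' (· + 1) fun R hR z hz =>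
      (hR (mem_image_of_mem _ hz)).trans_lt (lt_add_one R)
  set u : MvPolynomial ι ℝ := G ^ 2 * (C R - ∑ i, X i ^ 2) with hu
  set U : Set (ι → ℝ) := {x | eval x G ≠ 0} ∩ {x | ∑ i, x i ^ 2 < R}
  have heval (x : ι → ℝ) : eval x u = eval x G ^ 2 * (R - ∑ i, x i ^ 2) := by simp [hu]
  have hdeg : u.totalDegree ≤ 2 * G.totalDegree + 2 := by
    refine (totalDegree_mul _ _).trans (add_le_add (totalDegree_pow _ _) ?_)
    refine (totalDegree_sub _ _).trans (max_le (by simp) ?_)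
    exact (totalDegree_finsetSum _ _).trans (Finset.sup_le fun i _ => by simp)
  have hU : IsOpen U := (isOpen_ne_fun G.continuous_eval continuous_const).inter
    (isOpen_lt (by fun_prop) continuous_const)
  have hb : Bornology.IsBounded U := by
    refine isBounded_iff_forall_norm_le.mpr ⟨R + 1, fun x hx => ?_⟩
    have hxR : ∑ i, x i ^ 2 < R := hx.2
    have hsq (i : ι) : x i ^ 2 ≤ ∑ i, x i ^ 2 :=
      Finset.single_le_sum (f := fun i => x i ^ 2) (fun i _ => sq_nonneg _) (Finset.mem_univ i)
    have hR : 0 ≤ R := (Finset.sum_nonneg fun i _ => sq_nonneg (x i)).trans hxR.le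
    refine (pi_norm_le_iff_of_nonneg (by linarith)).mpr fun i => abs_le.mpr ?_
    constructor <;> nlinarith [hsq i]
  have hfr : ∀ x ∈ frontier U, eval x u ≤ 0 := by
    intro x hx
    rw [heval]
    by_cases hG : eval x G = 0
    · simp [hG]
    · have hxR : ¬ ∑ i, x i ^ 2 < R := fun h => (hU.frontier_eq ▸ hx).2 ⟨hG, h⟩
      exact mul_nonpos_of_nonneg_of_nonpos (sq_nonneg _) (by linarith)
  have hpos : ∀ z ∈ Z, 0 < eval z u := fun z hz => by
    rw [heval]
    exact mul_pos (sq_pos_of_ne_zero (hZ z hz)) (sub_pos.mpr (hR z hz))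
  refine (card_le_of_injOn_connectedComponentIn hU hb hfr (fun z hz => ⟨hZ z hz, hR z hz⟩) hpos
    fun z hz z' hz' h => hinj hz hz' ?_).trans (by gcongr)
  have hz'c : z' ∈ connectedComponentIn U z := h ▸ mem_connectedComponentIn ⟨hZ z' hz', hR z' hz'⟩
  exact connectedComponentIn_eq (connectedComponentIn_mono z inter_subset_left hz'c)

lemma card_image_cell_le [DecidableEq (Set (ι → ℝ))] {G : MvPolynomial ι ℝ}
    {S : Finset (ι → ℝ)} (hS : ∀ s ∈ S, eval s G ≠ 0) :
    (S.image (cell G)).card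
      ≤ (Fintype.card ι * (2 * G.totalDegree + 2) + 1) ^ Fintype.card ι := by
  obtain ⟨Z, hZS, hinj, hZ⟩ := Finset.exists_subset_injOn_image_eq_of_surjOn S (S.image (cell G))
    (by rw [Finset.coe_image]; exact surjOn_image _ _)
  rw [← hZ, Finset.card_image_of_injOn hinj]
  exact card_le_of_injOn_cell (fun z hz => hS z (hZS hz)) hinj

end Cells

section GeneralPosition

variable {ι K : Type*} [Field K]

/-- The polynomials that vanish at every point of a finite set. -/
def vanishingSubmodule (R : Finset (ι → K)) : Submodule K (MvPolynomial ι K) :=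
  (MvPolynomial.vanishingIdeal K (R : Set (ι → K))).restrictScalars K

lemma mem_vanishingSubmodule {R : Finset (ι → K)} {g : MvPolynomial ι K} :
    g ∈ vanishingSubmodule R ↔ ∀ r ∈ R, eval r g = 0 := by
  simp [vanishingSubmodule, aeval_eq_eval]

lemma vanishingSubmodule_anti : Antitone (vanishingSubmodule (ι := ι) (K := K)) :=
  fun _ _ h => MvPolynomial.vanishingIdeal_anti_mono (Finset.coe_subset.mpr h)

lemma exists_nontrivial_relation_eval (W : Submodule K (MvPolynomial ι K)) [Module.Finite K W]
    {B : Finset (ι → K)} (hB : Module.finrank K W < B.card) :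
    ∃ l : (ι → K) → K, (∀ g ∈ W, ∑ r ∈ B, l r * eval r g = 0) ∧ ∃ r ∈ B, l r ≠ 0 := by
  let ev : B → Module.Dual K W := fun r => (aeval (r : ι → K)).toLinearMap ∘ₗ W.subtype
  have hev : ¬ LinearIndependent K ev := fun hli => by
    have := hli.fintype_card_le_finrank
    rw [Subspace.dual_finrank_eq, Fintype.card_coe] at this
    exact absurd hB this.not_gt
  obtain ⟨l, hl, r₀, hr₀⟩ := Fintype.not_linearIndependent_iff.mp hev
  classical
  refine ⟨fun r => if h : r ∈ B then l ⟨r, h⟩ else 0, fun g hg => ?_, r₀, r₀.2, by simpa using hr₀⟩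
  rw [← Finset.sum_coe_sort B]
  simpa [ev, aeval_eq_eval, LinearMap.sum_apply] using congrArg (fun f => f ⟨g, hg⟩) hl

lemma exists_ne_zero_mem_vanishing (W : Submodule K (MvPolynomial ι K)) [Module.Finite K W]
    {R : Finset (ι → K)} (hR : R.card < Module.finrank K W) :
    ∃ g ∈ W, g ≠ 0 ∧ ∀ r ∈ R, eval r g = 0 := by
  let ev : W →ₗ[K] R → K :=
    (LinearMap.pi fun r : R => (aeval (r : ι → K)).toLinearMap) ∘ₗ W.subtype
  have hker : LinearMap.ker ev ≠ ⊥ := LinearMap.ker_ne_bot_of_finrank_lt (by simpa using hR)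
  obtain ⟨g, hg, hg₀⟩ := Submodule.exists_mem_ne_zero_of_ne_bot hker
  refine ⟨g, g.2, by simpa using hg₀, fun r hr => ?_⟩
  simpa [ev, aeval_eq_eval] using congrFun (LinearMap.mem_ker.mp hg) ⟨r, hr⟩

/-- The points of `S` impose independent conditions on `W`: each finite subset of `S` cuts the
dimension of `W` down by its cardinality, as long as anything is left. -/
def ImposesIndependentConditions (W : Submodule K (MvPolynomial ι K)) (S : Finset (ι → K)) :
    Prop :=
  ∀ R ⊆ S, Module.finrank K (W ⊓ vanishingSubmodule R : Submodule K (MvPolynomial ι K)) ≤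
    Module.finrank K W - R.card

lemma imposesIndependentConditions_empty (W : Submodule K (MvPolynomial ι K))
    [Module.Finite K W] : ImposesIndependentConditions W ∅ := by
  intro R hR
  rw [Finset.subset_empty.mp hR, Finset.card_empty]
  exact Submodule.finrank_mono inf_le_left

lemma ImposesIndependentConditions.exists_insert [DecidableEq (ι → K)]
    {W : Submodule K (MvPolynomial ι K)} [Module.Finite K W] {S : Finset (ι → K)}
    (hS : ImposesIndependentConditions W S) :
    ∃ g ≠ 0, ∀ x, eval x g ≠ 0 → ImposesIndependentConditions W (insert x S) := by
  have hmem (R : Finset (ι → K)) : ∃ g : MvPolynomial ι K, g ≠ 0 ∧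
      (W ⊓ vanishingSubmodule R ≠ ⊥ → g ∈ W ⊓ vanishingSubmodule R) := by
    by_cases h : W ⊓ vanishingSubmodule R = ⊥
    · exact ⟨1, one_ne_zero, fun h' => absurd h h'⟩
    · obtain ⟨g, hg, hg₀⟩ := Submodule.exists_mem_ne_zero_of_ne_bot h
      exact ⟨g, hg₀, fun _ => hg⟩
  choose G hG₀ hG using hmem
  refine ⟨∏ R ∈ S.powerset, G R, Finset.prod_ne_zero_iff.mpr fun R _ => hG₀ R, fun x hx R hR => ?_⟩
  rw [map_prod, Finset.prod_ne_zero_iff] at hx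
  by_cases hxR : x ∈ R
  swap
  · exact hS R ((Finset.subset_insert_iff_of_notMem hxR).mp hR)
  have hle : W ⊓ vanishingSubmodule R ≤ W ⊓ vanishingSubmodule (R.erase x) :=
    inf_le_inf_left W (vanishingSubmodule_anti (R.erase_subset x))
  have hRS : R.erase x ⊆ S := Finset.subset_insert_iff.mp hR
  by_cases hbot : W ⊓ vanishingSubmodule (R.erase x) = ⊥
  · rw [le_bot_iff.mp (hle.trans_eq hbot), finrank_bot]
    exact Nat.zero_le _
  · have hlt : W ⊓ vanishingSubmodule R < W ⊓ vanishingSubmodule (R.erase x) := by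
      refine lt_of_le_of_ne hle fun heq => ?_
      have hmem : G (R.erase x) ∈ W ⊓ vanishingSubmodule R := heq ▸ hG _ hbot
      exact hx _ (Finset.mem_powerset.mpr hRS) (mem_vanishingSubmodule.mp hmem.2 x hxR)
    have := Submodule.finiteDimensional_of_le
      (inf_le_left : W ⊓ vanishingSubmodule (R.erase x) ≤ W)
    have hfinrank := Submodule.finrank_lt_finrank_of_lt hlt
    have hcard := Finset.card_erase_add_one hxR
    have := hS _ hRS
    omega

lemma ImposesIndependentConditions.mem_of_eval_eq_zero {W : Submodule K (MvPolynomial ι K)}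
    [Module.Finite K W] {S : Finset (ι → K)} (hS : ImposesIndependentConditions W S)
    {R : Finset (ι → K)} (hRS : R ⊆ S) (hR : Module.finrank K W = R.card + 1)
    {g : MvPolynomial ι K} (hgW : g ∈ W) (hg₀ : g ≠ 0) (hgR : ∀ r ∈ R, eval r g = 0)
    {s : ι → K} (hs : s ∈ S) (hgs : eval s g = 0) : s ∈ R := by
  classical
  by_contra hsR
  have := Submodule.finiteDimensional_of_le
    (inf_le_left : W ⊓ vanishingSubmodule (insert s R) ≤ W)
  have hfinrank := hS (insert s R) (Finset.insert_subset hs hRS)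
  rw [Finset.card_insert_of_notMem hsR, hR, Nat.sub_self, Nat.le_zero,
    Submodule.finrank_eq_zero] at hfinrank
  refine hg₀ ((Submodule.mem_bot K).mp (hfinrank ▸ ⟨hgW, mem_vanishingSubmodule.mpr ?_⟩))
  exact (Finset.forall_mem_insert s R _).mpr ⟨hgs, hgR⟩

lemma exists_mem_eval_ne_zero [Finite ι] {U : Set (ι → ℝ)} (hU : IsOpen U) (hne : U.Nonempty)
    {p : MvPolynomial ι ℝ} (hp : p ≠ 0) : ∃ x ∈ U, eval x p ≠ 0 := by
  cases nonempty_fintype ι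
  by_contra! hzero
  obtain ⟨x₀, hx₀⟩ := hne
  obtain ⟨ε, hε, hball⟩ := Metric.isOpen_iff.mp hU x₀ hx₀
  refine hp (MvPolynomial.funext_set (fun i => Metric.ball (x₀ i) ε) (fun i => ?_) fun x hx => ?_)
  · rw [Real.ball_eq_Ioo]
    exact Ioo_infinite (by linarith)
  · rw [map_zero]
    exact hzero x (hball (ball_pi x₀ hε ▸ hx))

variable [Fintype ι] [Nonempty ι]

lemma exists_finrank_eq_le_restrictDegree (m : ℕ) :
    ∃ W ≤ restrictDegree ι K ⌊(m : ℝ) ^ (Fintype.card ι : ℝ)⁻¹⌋₊, Module.finrank K W = m + 1 := by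
  set N := ⌊(m : ℝ) ^ (Fintype.card ι : ℝ)⁻¹⌋₊
  have hm : m < (N + 1) ^ Fintype.card ι := by
    have hN : (m : ℝ) ^ (Fintype.card ι : ℝ)⁻¹ < N + 1 := Nat.lt_floor_add_one _
    rw [Real.rpow_inv_lt_iff_of_pos (by positivity) (by positivity) (by positivity),
      Real.rpow_natCast] at hN
    exact_mod_cast hN
  obtain ⟨f, hf⟩ := exists_linearIndependent_of_le_finrank (R := K)
    (M := restrictDegree ι K N) (n := m + 1) (by rwa [finrank_restrictDegree])
  refine ⟨(Submodule.span K (range f)).map (restrictDegree ι K N).subtype,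
    Submodule.map_subtype_le _ _, ?_⟩
  rw [Submodule.finrank_map_subtype_eq, finrank_span_eq_card hf, Fintype.card_fin]

variable (ι K) in
/-- A space of polynomials of dimension `m + 1` whose members have total degree `O(m ^ (1 / n))`,
where `n` is the number of variables: the polynomials in it can be made to vanish at `m` points. -/
def polySpace (m : ℕ) : Submodule K (MvPolynomial ι K) :=
  (exists_finrank_eq_le_restrictDegree m).choose

lemma finrank_polySpace (m : ℕ) : Module.finrank K (polySpace ι K m) = m + 1 :=
  (exists_finrank_eq_le_restrictDegree m).choose_spec.2

instance finite_polySpace (m : ℕ) : Module.Finite K (polySpace ι K m) :=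
  FiniteDimensional.of_finrank_pos (by rw [finrank_polySpace]; exact m.succ_pos)

lemma totalDegree_le_of_mem_polySpace {m : ℕ} {g : MvPolynomial ι K} (hg : g ∈ polySpace ι K m) :
    (g.totalDegree : ℝ) ≤ Fintype.card ι * (m : ℝ) ^ (Fintype.card ι : ℝ)⁻¹ := by
  have hdeg := totalDegree_le_of_mem_restrictDegree
    ((exists_finrank_eq_le_restrictDegree m).choose_spec.1 hg)
  refine (Nat.cast_le.mpr hdeg).trans ?_
  rw [Nat.cast_mul]
  gcongr
  exact Nat.floor_le (by positivity)

lemma exists_mem_polySpace_vanishing (R : Finset (ι → K)) :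
    ∃ g ∈ polySpace ι K R.card, g ≠ 0 ∧ ∀ r ∈ R, eval r g = 0 :=
  exists_ne_zero_mem_vanishing _ (by rw [finrank_polySpace]; exact R.card.lt_succ_self)

/-- A nonzero polynomial of low degree that vanishes at every point of `R`. -/
def interpolant (R : Finset (ι → K)) : MvPolynomial ι K :=
  (exists_mem_polySpace_vanishing R).choose

lemma interpolant_mem_polySpace (R : Finset (ι → K)) : interpolant R ∈ polySpace ι K R.card :=
  (exists_mem_polySpace_vanishing R).choose_spec.1

lemma interpolant_ne_zero (R : Finset (ι → K)) : interpolant R ≠ 0 :=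
  (exists_mem_polySpace_vanishing R).choose_spec.2.1

lemma eval_interpolant_of_mem {R : Finset (ι → K)} {r : ι → K} (hr : r ∈ R) :
    eval r (interpolant R) = 0 :=
  (exists_mem_polySpace_vanishing R).choose_spec.2.2 r hr

/-- No point of `S` lies on the interpolating polynomial of other points of `S`. -/
def InGeneralPosition (S : Finset (ι → K)) : Prop :=
  ∀ R ⊆ S, ∀ s ∈ S, eval s (interpolant R) = 0 → s ∈ R

lemma InGeneralPosition.mono {S S' : Finset (ι → K)} (hS : InGeneralPosition S) (h : S' ⊆ S) :
    InGeneralPosition S' :=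
  fun R hR s hs => hS R (hR.trans h) s (h hs)

lemma inGeneralPosition_of_imposesIndependentConditions {S : Finset (ι → K)}
    (hS : ∀ m ≤ S.card, ImposesIndependentConditions (polySpace ι K m) S) :
    InGeneralPosition S := by
  intro R hR s hs hzero
  exact (hS R.card (Finset.card_le_card hR)).mem_of_eval_eq_zero hR (finrank_polySpace _)
    (interpolant_mem_polySpace R) (interpolant_ne_zero R) (fun _ => eval_interpolant_of_mem)
    hs hzero

lemma exists_mem_imposesIndependentConditions_insert [DecidableEq (ι → ℝ)]
    {U : Set (ι → ℝ)} (hU : IsOpen U) (hne : U.Nonempty) {S : Finset (ι → ℝ)} {M : ℕ}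
    (hS : ∀ m ≤ M, ImposesIndependentConditions (polySpace ι ℝ m) S) :
    ∃ x ∈ U, x ∉ S ∧ ∀ m ≤ M, ImposesIndependentConditions (polySpace ι ℝ m) (insert x S) := by
  obtain ⟨i⟩ := ‹Nonempty ι›
  choose! g hg₀ hg using fun m hm => (hS m hm).exists_insert
  have havoid : ∏ s ∈ S, (X i - C (s i) : MvPolynomial ι ℝ) ≠ 0 :=
    Finset.prod_ne_zero_iff.mpr fun s _ h => by simpa using congrArg (eval fun _ => s i + 1) h
  have hprod : ∏ m ∈ Finset.range (M + 1), g m ≠ 0 :=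
    Finset.prod_ne_zero_iff.mpr fun m hm => hg₀ m (Finset.mem_range_succ_iff.mp hm)
  obtain ⟨x, hxU, hx⟩ := exists_mem_eval_ne_zero hU hne (mul_ne_zero havoid hprod)
  rw [map_mul, mul_ne_zero_iff, map_prod, map_prod, Finset.prod_ne_zero_iff,
    Finset.prod_ne_zero_iff] at hx
  exact ⟨x, hxU, fun hxS => by simpa using hx.1 x hxS,
    fun m hm => hg m hm x (hx.2 m (Finset.mem_range_succ_iff.mpr hm))⟩

lemma exists_injOn_inGeneralPosition {α : Type*} [DecidableEq (ι → ℝ)] (S : Finset α)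
    {U : α → Set (ι → ℝ)} (hU : ∀ a, IsOpen (U a)) (hne : ∀ a, (U a).Nonempty) :
    ∃ φ : α → ι → ℝ, (∀ a, φ a ∈ U a) ∧ InjOn φ S ∧ InGeneralPosition (S.image φ) := by
  suffices h : ∀ M : ℕ, ∃ φ : α → ι → ℝ, (∀ a, φ a ∈ U a) ∧ InjOn φ S ∧
      ∀ m ≤ M, ImposesIndependentConditions (polySpace ι ℝ m) (S.image φ) by
    obtain ⟨φ, hφU, hφ, hind⟩ := h S.card
    refine ⟨φ, hφU, hφ, inGeneralPosition_of_imposesIndependentConditions fun m hm => ?_⟩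
    exact hind m (hm.trans Finset.card_image_le)
  intro M
  classical
  induction S using Finset.induction_on with
  | empty =>
    choose φ hφ using hne
    refine ⟨φ, hφ, by simp, fun m _ => ?_⟩
    simpa using imposesIndependentConditions_empty (polySpace ι ℝ m)
  | insert a S ha ih =>
    obtain ⟨φ, hφU, hφ, hind⟩ := ih
    obtain ⟨x, hxU, hxS, hx⟩ := exists_mem_imposesIndependentConditions_insert (hU a) (hne a) hind
    have hcongr : EqOn (Function.update φ a x) φ S := fun b hb =>
      Function.update_of_ne (ne_of_mem_of_not_mem hb ha) _ _
    have himage : S.image (Function.update φ a x) = S.image φ := Finset.image_congr hcongr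
    refine ⟨Function.update φ a x, fun b => ?_, ?_, fun m hm => ?_⟩
    · obtain rfl | hb := eq_or_ne b a
      · rwa [Function.update_self]
      · rw [Function.update_of_ne hb]
        exact hφU b
    · rw [Finset.coe_insert, injOn_insert (Finset.mem_coe.not.mpr ha), hcongr.image_eq,
        Function.update_self]
      exact ⟨hφ.congr hcongr.symm, by simpa using hxS⟩
    · rw [Finset.image_insert, himage, Function.update_self]
      exact hx m hm

end GeneralPosition

section Averaging

variable {α : Type*}

lemma card_offDiag_filter_eq_sum {L : Type*} [Fintype L] [DecidableEq L] (l : α → L)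
    (S : Finset α) :
    {q ∈ S.offDiag | l q.1 = l q.2}.card = ∑ i, {s ∈ S | l s = i}.offDiag.card := by
  rw [Finset.card_eq_sum_card_fiberwise (f := fun q => l q.1) (t := Finset.univ) (by simp)]
  refine Finset.sum_congr rfl fun i _ => congrArg _ ?_
  ext ⟨x, y⟩
  simp only [Finset.mem_offDiag, Finset.mem_filter]
  grind

lemma card_offDiag_filter_mul_neg_le (P : Finset α) (l : α → ℝ) :
    2 * {q ∈ P.offDiag | l q.1 * l q.2 < 0}.card ≤ P.card ^ 2 := by
  classical
  set p := {x ∈ P | 0 < l x}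
  set q := {x ∈ P | l x < 0}
  have hsub : {z ∈ P.offDiag | l z.1 * l z.2 < 0} ⊆ p ×ˢ q ∪ q ×ˢ p := by
    intro z hz
    simp only [Finset.mem_filter, Finset.mem_offDiag, mul_neg_iff] at hz
    simp only [p, q, Finset.mem_union, Finset.mem_product, Finset.mem_filter]
    tauto
  have hdisj : Disjoint p q :=
    Finset.disjoint_filter.mpr fun _ _ hpos => hpos.not_gt
  have hadd : p.card + q.card ≤ P.card := by
    rw [← Finset.card_union_of_disjoint hdisj]
    exact Finset.card_le_card (Finset.union_subset (P.filter_subset _) (P.filter_subset _))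
  have hcard := (Finset.card_le_card hsub).trans (Finset.card_union_le _ _)
  rw [Finset.card_product, Finset.card_product] at hcard
  calc _ ≤ 2 * (p.card * q.card + q.card * p.card) := by omega
    _ ≤ (p.card + q.card) ^ 2 := by linarith [two_mul_le_add_sq p.card q.card]
    _ ≤ _ := Nat.pow_le_pow_left hadd 2

variable [DecidableEq α]

lemma sum_card_offDiag_sdiff_le (A : Finset α) (c : ℕ) (r : Finset α → α × α → Prop)
    [∀ Q, DecidablePred (r Q)] :
    ∑ Q ∈ A.powersetCard c, {q ∈ (A \ Q).offDiag | r Q q}.card ≤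
      ∑ P ∈ A.powersetCard (c + 2), {q ∈ P.offDiag | r (P \ {q.1, q.2}) q}.card := by
  rw [← Finset.card_sigma, ← Finset.card_sigma]
  refine Finset.card_le_card_of_injOn (fun z => ⟨z.1 ∪ {z.2.1, z.2.2}, z.2⟩) ?_ ?_
  · rintro ⟨Q, x, y⟩ hz
    simp only [Finset.coe_sigma, mem_sigma_iff, Finset.mem_coe, Finset.mem_powersetCard,
      Finset.mem_filter, Finset.mem_offDiag, Finset.mem_sdiff] at hz ⊢
    obtain ⟨⟨hQA, hQ⟩, ⟨⟨hxA, hxQ⟩, ⟨hyA, hyQ⟩, hxy⟩, hr⟩ := hz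
    have hdisj : Disjoint Q {x, y} := by simp [hxQ, hyQ]
    rw [Finset.union_sdiff_cancel_right hdisj, Finset.card_union_of_disjoint hdisj, hQ,
      Finset.card_pair hxy]
    exact ⟨⟨Finset.union_subset hQA (Finset.insert_subset hxA (by simpa using hyA)), rfl⟩,
      ⟨by simp, by simp, hxy⟩, hr⟩
  · rintro ⟨Q, x, y⟩ hz ⟨Q', x', y'⟩ hz' heq
    simp only [Finset.coe_sigma, mem_sigma_iff, Finset.mem_coe, Finset.mem_powersetCard,
      Finset.mem_filter, Finset.mem_offDiag, Finset.mem_sdiff] at hz hz'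
    obtain ⟨hunion, rfl, rfl⟩ : Q ∪ {x, y} = Q' ∪ {x', y'} ∧ x = x' ∧ y = y' := by
      simpa using heq
    have hdisj : Disjoint Q {x, y} := by simp [hz.2.1.1.2, hz.2.1.2.1.2]
    have hdisj' : Disjoint Q' {x, y} := by simp [hz'.2.1.1.2, hz'.2.1.2.1.2]
    rw [← Finset.union_sdiff_cancel_right hdisj, hunion, Finset.union_sdiff_cancel_right hdisj']

lemma choose_add_two_mul_le (a c : ℕ) :
    a.choose (c + 2) * ((c + 2) * (c + 1)) ≤ (a * a - a) * a.choose c := by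
  calc a.choose (c + 2) * ((c + 2) * (c + 1))
      = a.choose (c + 1) * (c + 1) * (a - (c + 1)) := by
        rw [← mul_assoc, Nat.choose_succ_right_eq]; ring
    _ = (a - c) * (a - (c + 1)) * a.choose c := by rw [Nat.choose_succ_right_eq]; ring
    _ ≤ a * (a - 1) * a.choose c := by gcongr <;> omega
    _ = (a * a - a) * a.choose c := by rw [Nat.mul_sub, mul_one]

/- Removing a random `c`-subset `Q` and choosing a random pair of the remaining points amounts to
choosing a random `(c + 2)`-subset and a random pair in it. -/
lemma sum_card_offDiag_sdiff_le_of_forall {A : Finset α} {c : ℕ} {r : Finset α → α × α → Prop}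
    [∀ Q, DecidablePred (r Q)] (hr : ∀ P ∈ A.powersetCard (c + 2),
      2 * {q ∈ P.offDiag | r (P \ {q.1, q.2}) q}.card ≤ P.card ^ 2) :
    2 * (c + 1) * ∑ Q ∈ A.powersetCard c, {q ∈ (A \ Q).offDiag | r Q q}.card ≤
      (c + 2) * A.offDiag.card * (A.powersetCard c).card := by
  calc _ ≤ 2 * (c + 1) * ∑ P ∈ A.powersetCard (c + 2),
        {q ∈ P.offDiag | r (P \ {q.1, q.2}) q}.card :=
        Nat.mul_le_mul_left _ (sum_card_offDiag_sdiff_le A c r)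
    _ = (c + 1) * ∑ P ∈ A.powersetCard (c + 2),
        2 * {q ∈ P.offDiag | r (P \ {q.1, q.2}) q}.card := by rw [← Finset.mul_sum]; ring
    _ ≤ (c + 1) * ∑ P ∈ A.powersetCard (c + 2), (c + 2) ^ 2 := by
        gcongr with P hP
        exact (hr P hP).trans_eq (by rw [(Finset.mem_powersetCard.mp hP).2])
    _ = (c + 2) * (A.card.choose (c + 2) * ((c + 2) * (c + 1))) := by
        rw [Finset.sum_const, Finset.card_powersetCard, smul_eq_mul]; ring
    _ ≤ (c + 2) * ((A.card * A.card - A.card) * A.card.choose c) :=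
        Nat.mul_le_mul_left _ (choose_add_two_mul_le _ _)
    _ = _ := by rw [Finset.offDiag_card, Finset.card_powersetCard, mul_assoc]

lemma card_mul_sum_piFinset {L β : Type*} [Fintype L] [DecidableEq L]
    (X : L → Finset β) (i : L) (F : (L → β) → ℕ) :
    (X i).card * ∑ R ∈ Fintype.piFinset X, F R =
      ∑ R ∈ Fintype.piFinset X, ∑ Q ∈ X i, F (Function.update R i Q) := by
  have hmem : ∀ z ∈ Fintype.piFinset X ×ˢ X i,
      (Function.update z.1 i z.2, z.1 i) ∈ Fintype.piFinset X ×ˢ X i := by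
    rintro ⟨R, Q⟩ hz
    simp only [Finset.mem_product, Fintype.mem_piFinset] at hz ⊢
    refine ⟨fun j => ?_, hz.1 i⟩
    obtain rfl | hj := eq_or_ne j i
    · simpa using hz.2
    · simpa [Function.update_of_ne hj] using hz.1 j
  rw [← smul_eq_mul, ← Finset.sum_const, Finset.sum_comm, ← Finset.sum_product',
    ← Finset.sum_product']
  exact Finset.sum_nbij' (fun z => (Function.update z.1 i z.2, z.1 i))
    (fun z => (Function.update z.1 i z.2, z.1 i)) hmem hmem (by simp) (by simp) (by simp)

/-- In every `P ⊆ B ⊆ S`, the colouring `b (B \ {x, y})` separates `x` from `y` for at least about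
half of the pairs in `P`. In the application `b R` records the sides of a hypersurface through
`R`. -/
def HalvesPairs (b : Finset α → α → Bool) (S : Finset α) : Prop :=
  ∀ B ⊆ S, ∀ P ⊆ B,
    2 * {q ∈ P.offDiag | b (B \ {q.1, q.2}) q.1 = b (B \ {q.1, q.2}) q.2}.card ≤ P.card ^ 2

variable {b : Finset α → α → Bool} {S : Finset α}

lemma HalvesPairs.mono (hb : HalvesPairs b S) {S' : Finset α} (h : S' ⊆ S) : HalvesPairs b S' :=
  fun B hB => hb B (hB.trans h)

lemma HalvesPairs.sum_powersetCard_le (hb : HalvesPairs b S) {A B : Finset α} (hA : A ⊆ S)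
    (hB : B ⊆ S) (hdisj : Disjoint B A) (c : ℕ) :
    2 * (c + 1) * ∑ Q ∈ A.powersetCard (min c A.card),
        {q ∈ (A \ Q).offDiag | b (B ∪ Q) q.1 = b (B ∪ Q) q.2}.card ≤
      (c + 2) * A.offDiag.card * (A.powersetCard (min c A.card)).card := by
  obtain hc | hc := le_total A.card c
  · simp [min_eq_right hc]
  rw [min_eq_left hc]
  refine sum_card_offDiag_sdiff_le_of_forall
    (r := fun Q q => b (B ∪ Q) q.1 = b (B ∪ Q) q.2) fun P hP => ?_
  obtain ⟨hPA, -⟩ := Finset.mem_powersetCard.mp hP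
  have hsdiff : ∀ q ∈ P.offDiag, B ∪ P \ {q.1, q.2} = (B ∪ P) \ {q.1, q.2} := fun q hq => by
    obtain ⟨hx, hy, -⟩ := Finset.mem_offDiag.mp hq
    rw [Finset.union_sdiff_distrib, Finset.sdiff_eq_self_of_disjoint (s := B)]
    simp [Finset.disjoint_right.mp hdisj (hPA hx), Finset.disjoint_right.mp hdisj (hPA hy)]
  rw [Finset.filter_congr fun q hq => by rw [hsdiff q hq]]
  exact hb _ (Finset.union_subset hB (hPA.trans hA)) P Finset.subset_union_right

lemma HalvesPairs.sum_piFinset_le {L : Type*} [Fintype L] [DecidableEq L] (hb : HalvesPairs b S)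
    {A : L → Finset α} (hA : ∀ i, A i ⊆ S) (hdisj : Pairwise fun i j => Disjoint (A i) (A j))
    (c : ℕ) (i : L) :
    2 * (c + 1) * ∑ R ∈ Fintype.piFinset fun i => (A i).powersetCard (min c (A i).card),
        {q ∈ (A i \ R i).offDiag | b (Finset.univ.biUnion R) q.1 =
          b (Finset.univ.biUnion R) q.2}.card ≤
      (c + 2) * (A i).offDiag.card *
        (Fintype.piFinset fun i => (A i).powersetCard (min c (A i).card)).card := by
  set X : L → Finset (Finset α) := fun i => (A i).powersetCard (min c (A i).card)
  have hX : 0 < (X i).card :=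
    Finset.card_pos.mpr (Finset.powersetCard_nonempty.mpr (min_le_right _ _))
  have hclass : ∀ R ∈ Fintype.piFinset X, 2 * (c + 1) * ∑ Q ∈ X i,
      {q ∈ (A i \ Q).offDiag | b (Finset.univ.biUnion (Function.update R i Q)) q.1 =
        b (Finset.univ.biUnion (Function.update R i Q)) q.2}.card ≤
        (c + 2) * (A i).offDiag.card * (X i).card := by
    intro R hR
    have hRA (j : L) : R j ⊆ A j :=
      (Finset.mem_powersetCard.mp (Fintype.mem_piFinset.mp hR j)).1
    have hunion (Q : Finset α) : Finset.univ.biUnion (Function.update R i Q) =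
        (Finset.univ.erase i).biUnion R ∪ Q := by
      rw [← Finset.insert_erase (Finset.mem_univ i), Finset.biUnion_insert, Function.update_self,
        Finset.erase_insert_eq_erase, Finset.erase_idem, Finset.union_comm]
      congr 1
      exact Finset.biUnion_congr rfl fun j hj =>
        Function.update_of_ne (Finset.ne_of_mem_erase hj) _ _
    simp only [hunion]
    refine hb.sum_powersetCard_le (hA i) ?_ ?_ c
    · exact Finset.biUnion_subset.mpr fun j _ => (hRA j).trans (hA j)
    · exact (Finset.disjoint_biUnion_left _ _ _).mpr fun j hj =>
        (hdisj (Finset.ne_of_mem_erase hj)).mono_left (hRA j)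
  refine Nat.le_of_mul_le_mul_left ?_ hX
  calc (X i).card * (2 * (c + 1) * ∑ R ∈ Fintype.piFinset X, _)
      = ∑ R ∈ Fintype.piFinset X, 2 * (c + 1) * ∑ Q ∈ X i,
        {q ∈ (A i \ Q).offDiag | b (Finset.univ.biUnion (Function.update R i Q)) q.1 =
        b (Finset.univ.biUnion (Function.update R i Q)) q.2}.card := by
        rw [mul_left_comm, card_mul_sum_piFinset, Finset.mul_sum]
        simp only [Function.update_self]
    _ ≤ ∑ R ∈ Fintype.piFinset X, (c + 2) * (A i).offDiag.card * (X i).card :=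
        Finset.sum_le_sum hclass
    _ = (X i).card * ((c + 2) * (A i).offDiag.card * (Fintype.piFinset X).card) := by
        rw [Finset.sum_const, smul_eq_mul]; ring

lemma HalvesPairs.exists_subset {L : Type*} [Fintype L] [DecidableEq L] (hb : HalvesPairs b S)
    (l : α → L) (c : ℕ) : ∃ R ⊆ S, R.card ≤ c * Fintype.card L ∧
      2 * (c + 1) * {q ∈ (S \ R).offDiag | l q.1 = l q.2 ∧ b R q.1 = b R q.2}.card ≤
        (c + 2) * {q ∈ S.offDiag | l q.1 = l q.2}.card := by
  set A : L → Finset α := fun i => {s ∈ S | l s = i}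
  set X : L → Finset (Finset α) := fun i => (A i).powersetCard (min c (A i).card)
  have hA (i : L) : A i ⊆ S := Finset.filter_subset _ _
  have hdisj : Pairwise fun i j => Disjoint (A i) (A j) := fun i j hij =>
    Finset.disjoint_filter.mpr fun s _ hi hj => hij (hi.symm.trans hj)
  have hX : (Fintype.piFinset X).Nonempty := Fintype.piFinset_nonempty.mpr fun i =>
    Finset.powersetCard_nonempty.mpr (min_le_right _ _)
  obtain ⟨R, hR, hle⟩ : ∃ R ∈ Fintype.piFinset X,
      2 * (c + 1) * ∑ i, {q ∈ (A i \ R i).offDiag | b (Finset.univ.biUnion R) q.1 =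
          b (Finset.univ.biUnion R) q.2}.card ≤
        (c + 2) * ∑ i, (A i).offDiag.card := by
    refine Finset.exists_le_of_sum_le hX ?_
    rw [← Finset.mul_sum, Finset.sum_comm, Finset.mul_sum, Finset.sum_const, smul_eq_mul,
      Finset.mul_sum, Finset.mul_sum]
    exact Finset.sum_le_sum fun i _ =>
      (hb.sum_piFinset_le hA hdisj c i).trans_eq (Nat.mul_comm _ _)
  have hRA (i : L) : R i ⊆ A i ∧ (R i).card = min c (A i).card :=
    Finset.mem_powersetCard.mp (Fintype.mem_piFinset.mp hR i)
  refine ⟨Finset.univ.biUnion R, Finset.biUnion_subset.mpr fun i _ => (hRA i).1.trans (hA i),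
    ?_, ?_⟩
  · refine Finset.card_biUnion_le.trans ((Finset.sum_le_card_nsmul _ _ c fun i _ => ?_).trans_eq ?_)
    · exact (hRA i).2.trans_le (min_le_left _ _)
    · rw [Finset.card_univ, smul_eq_mul, mul_comm]
  · rw [card_offDiag_filter_eq_sum]
    refine (Nat.mul_le_mul_left _ ?_).trans hle
    rw [Finset.card_eq_sum_card_fiberwise (f := fun q => l q.1) (t := Finset.univ) (by simp)]
    refine Finset.sum_le_sum fun i _ => Finset.card_le_card ?_
    rintro ⟨x, y⟩ hxy
    simp only [Finset.mem_filter, Finset.mem_offDiag, Finset.mem_sdiff, Finset.mem_biUnion,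
      Finset.mem_univ, true_and, not_exists, A] at hxy ⊢
    grind

lemma HalvesPairs.exists_iterate (hb : HalvesPairs b S) (c : ℕ → ℕ) (J : ℕ) :
    ∃ R : ℕ → Finset α, (∀ i < J, R i ⊆ S ∧ (R i).card ≤ c i * 2 ^ i) ∧
      ({q ∈ (S \ (Finset.range J).biUnion R).offDiag |
          ∀ i < J, b (R i) q.1 = b (R i) q.2}.card : ℝ) ≤
        (S.card : ℝ) ^ 2 * ∏ i ∈ Finset.range J, ((c i + 2 : ℝ) / (2 * (c i + 1))) := by
  induction J with
  | zero =>
    have hcard : S.card * S.card - S.card ≤ S.card ^ 2 := by rw [sq]; omega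
    exact ⟨fun _ => ∅, by simp, by simpa using mod_cast hcard⟩
  | succ J ih =>
    obtain ⟨R, hR, hpairs⟩ := ih
    set S₁ := S \ (Finset.range J).biUnion R
    obtain ⟨Q, hQS, hQ, hle⟩ := (hb.mono Finset.sdiff_subset : HalvesPairs b S₁).exists_subset
      (fun s (i : Fin J) => b (R i) s) (c J)
    simp only [Fintype.card_pi, Fintype.card_bool, Finset.prod_const, Finset.card_univ,
      Fintype.card_fin, _root_.funext_iff, Fin.forall_iff] at hQ hle
    have hupd : ∀ i < J, Function.update R J Q i = R i := fun i hi =>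
      Function.update_of_ne hi.ne _ _
    have hunion : (Finset.range (J + 1)).biUnion (Function.update R J Q) =
        Q ∪ (Finset.range J).biUnion R := by
      rw [Finset.range_add_one, Finset.biUnion_insert, Function.update_self]
      congr 1
      exact Finset.biUnion_congr rfl fun i hi => hupd i (Finset.mem_range.mp hi)
    refine ⟨Function.update R J Q, fun i hi => ?_, ?_⟩
    · obtain hi | rfl := Nat.lt_succ_iff_lt_or_eq.mp hi
      · rw [hupd i hi]
        exact hR i hi
      · rw [Function.update_self]
        exact ⟨hQS.trans Finset.sdiff_subset, hQ⟩
    · rw [hunion, Finset.union_comm, ← Finset.sup_eq_union, ← sdiff_sdiff_left,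
        Finset.prod_range_succ, ← mul_assoc]
      simp only [Nat.forall_lt_succ_right, Function.update_self]
      have hfilter : ∀ q : α × α, (∀ i < J, b (Function.update R J Q i) q.1 =
          b (Function.update R J Q i) q.2) ↔ ∀ i < J, b (R i) q.1 = b (R i) q.2 :=
        fun q => forall₂_congr fun i hi => by rw [hupd i hi]
      simp only [hfilter]
      refine le_trans ?_ (mul_le_mul_of_nonneg_right hpairs (by positivity))
      rw [mul_div_assoc', le_div_iff₀ (by positivity), mul_comm, mul_comm (Nat.cast _)]
      exact_mod_cast hle

end Averaging

section Partition

variable {ι : Type*} [Fintype ι] [Nonempty ι]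

/- A linear relation among the values at the points of `B`, applied to the interpolant of
`B \ {x, y}`, only involves `x` and `y`. -/
lemma InGeneralPosition.exists_mul_eval_add_mul_eval_eq_zero [DecidableEq (ι → ℝ)]
    {S B : Finset (ι → ℝ)} (hS : InGeneralPosition S) (hB : B ⊆ S) :
    ∃ l : (ι → ℝ) → ℝ, ∀ x ∈ B, ∀ y ∈ B, x ≠ y → l y ≠ 0 ∧
      l x * eval x (interpolant (B \ {x, y})) + l y * eval y (interpolant (B \ {x, y})) = 0 := by
  obtain hcard | hcard := lt_or_ge 1 B.card
  swap
  · exact ⟨0, fun x hx y hy hxy => (hxy (Finset.card_le_one.mp hcard x hx y hy)).elim⟩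
  obtain ⟨l, hl, r, hr, hlr⟩ := exists_nontrivial_relation_eval (polySpace ι ℝ (B.card - 2))
    (B := B) (by rw [finrank_polySpace]; omega)
  have hrel : ∀ x ∈ B, ∀ y ∈ B, x ≠ y →
      l x * eval x (interpolant (B \ {x, y})) + l y * eval y (interpolant (B \ {x, y})) = 0 := by
    intro x hx y hy hxy
    have hsub : {x, y} ⊆ B := Finset.insert_subset hx (by simpa using hy)
    have hmem := interpolant_mem_polySpace (B \ {x, y})
    rw [Finset.card_sdiff_of_subset hsub, Finset.card_pair hxy] at hmem
    rw [← hl _ hmem, ← Finset.sum_subset hsub fun z hz hzxy => ?_, Finset.sum_pair hxy]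
    rw [eval_interpolant_of_mem (Finset.mem_sdiff.mpr ⟨hz, hzxy⟩), mul_zero]
  refine ⟨l, fun x hx y hy hxy => ⟨fun hly => ?_, hrel x hx y hy hxy⟩⟩
  have hry : y ≠ r := fun h => hlr (h ▸ hly)
  have hzero := hrel y hy r hr hry
  rw [hly, zero_mul, zero_add, mul_eq_zero, or_iff_right hlr] at hzero
  have := hS _ (Finset.sdiff_subset.trans hB) r (hB hr) hzero
  simp at this

lemma InGeneralPosition.halvesPairs [DecidableEq (ι → ℝ)] {S : Finset (ι → ℝ)}
    (hS : InGeneralPosition S) :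
    HalvesPairs (fun R x => decide (0 < eval x (interpolant R))) S := by
  intro B hB P hP
  obtain ⟨l, hl⟩ := hS.exists_mul_eval_add_mul_eval_eq_zero hB
  refine le_trans ?_ (card_offDiag_filter_mul_neg_le P l)
  refine Nat.mul_le_mul_left 2 (Finset.card_le_card fun q hq => ?_)
  obtain ⟨hqP, hside⟩ := Finset.mem_filter.mp hq
  obtain ⟨hx, hy, hxy⟩ := Finset.mem_offDiag.mp hqP
  refine Finset.mem_filter.mpr ⟨hqP, ?_⟩
  obtain ⟨hly, hrel⟩ := hl _ (hP hx) _ (hP hy) hxy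
  have hne : ∀ z ∈ ({q.1, q.2} : Finset _), eval z (interpolant (B \ {q.1, q.2})) ≠ 0 := by
    intro z hz hzero
    have hzB : z ∈ B := Finset.insert_subset (hP hx) (by simpa using hP hy) hz
    have := hS _ (Finset.sdiff_subset.trans hB) z (hB hzB) hzero
    exact (Finset.mem_sdiff.mp this).2 hz
  have hne₁ := hne q.1 (by simp)
  have hne₂ := hne q.2 (by simp)
  set u := eval q.1 (interpolant (B \ {q.1, q.2}))
  set v := eval q.2 (interpolant (B \ {q.1, q.2}))
  have hside : 0 < u ↔ 0 < v := by simpa using hside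
  have huv : 0 < u * v := by
    obtain hu | hu := hne₁.lt_or_gt
    · exact mul_pos_of_neg_of_neg hu (hne₂.lt_of_le (not_lt.mp (hside.not.mp hu.not_gt)))
    · exact mul_pos hu (hside.mp hu)
  have hneg : (l q.1 * l q.2) * (u * v) < 0 := by
    have : (l q.1 * l q.2) * (u * v) = -(l q.2 * v) ^ 2 := by linear_combination l q.2 * v * hrel
    rw [this]
    exact neg_neg_of_pos (by positivity)
  exact neg_of_mul_neg_left hneg huv.le

lemma sum_range_le_of_le_geometric {J : ℕ} {a : ℕ → ℝ} {q A : ℝ} (hq₀ : 0 ≤ q) (hq₁ : q < 1)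
    (hA : 0 ≤ A) (ha : ∀ i < J, a i ≤ q ^ (J - 1 - i) * A) :
    ∑ i ∈ Finset.range J, a i ≤ (1 - q)⁻¹ * A := by
  calc ∑ i ∈ Finset.range J, a i
      ≤ ∑ i ∈ Finset.range J, q ^ (J - 1 - i) * A :=
        Finset.sum_le_sum fun i hi => ha i (Finset.mem_range.mp hi)
    _ = (∑ i ∈ Finset.range J, q ^ i) * A := by
        rw [← Finset.sum_mul, Finset.sum_range_reflect (fun i => q ^ i)]
    _ ≤ (1 - q)⁻¹ * A := by
        rw [← tsum_geometric_of_lt_one hq₀ hq₁]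
        gcongr
        exact (summable_geometric_of_lt_one hq₀ hq₁).sum_le_tsum _ fun i _ => by positivity

/-- The number of points per class interpolated in the `i`-th of `J` rounds. It grows backwards from
the last round fast enough for the losses in the halving to be summable, and slower than the number
`2 ^ i` of classes decreases. -/
def sampleSize (J i : ℕ) : ℕ := ⌈(3 / 2 : ℝ) ^ (J - 1 - i)⌉₊

lemma sampleSize_mul_two_pow_le {J i : ℕ} (hi : i < J) :
    (sampleSize J i * 2 ^ i : ℝ) ≤ (3 / 4) ^ (J - 1 - i) * 2 ^ J := by
  obtain ⟨j, rfl⟩ := Nat.exists_eq_add_of_lt hi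
  rw [sampleSize, show i + j + 1 - 1 - i = j by omega]
  have hceil : (⌈(3 / 2 : ℝ) ^ j⌉₊ : ℝ) ≤ 2 * (3 / 2) ^ j :=
    Nat.ceil_le_two_mul (le_trans (by norm_num) (one_le_pow₀ (by norm_num : (1 : ℝ) ≤ 3 / 2)))
  calc (⌈(3 / 2 : ℝ) ^ j⌉₊ * 2 ^ i : ℝ) ≤ 2 * (3 / 2) ^ j * 2 ^ i := by gcongr
    _ = (3 / 4 * 2) ^ j * 2 * 2 ^ i := by norm_num; ring
    _ = (3 / 4) ^ j * 2 ^ (i + j + 1) := by rw [mul_pow]; ring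

lemma prod_sampleSize_le (J : ℕ) :
    ∏ i ∈ Finset.range J, ((sampleSize J i + 2 : ℝ) / (2 * (sampleSize J i + 1))) ≤ 32 / 2 ^ J := by
  have hfactor : ∀ i, ((sampleSize J i + 2 : ℝ) / (2 * (sampleSize J i + 1))) ≤
      Real.exp ((2 / 3) ^ (J - 1 - i)) * (1 / 2) := by
    intro i
    have hceil : ((3 / 2 : ℝ) ^ (J - 1 - i)) ≤ sampleSize J i := Nat.le_ceil _
    have hinv : (1 : ℝ) / (sampleSize J i + 1) ≤ (2 / 3) ^ (J - 1 - i) := by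
      rw [show (2 / 3 : ℝ) = (3 / 2)⁻¹ by norm_num, inv_pow, one_div]
      exact inv_anti₀ (by positivity) (by linarith)
    calc ((sampleSize J i + 2 : ℝ) / (2 * (sampleSize J i + 1)))
        = (1 / (sampleSize J i + 1) + 1) * (1 / 2) := by field_simp; ring
      _ ≤ _ := by gcongr; linarith [Real.add_one_le_exp ((2 / 3 : ℝ) ^ (J - 1 - i))]
  have hsum : ∑ i ∈ Finset.range J, (2 / 3 : ℝ) ^ (J - 1 - i) ≤ 3 :=
    (sum_range_le_of_le_geometric (q := 2 / 3) (A := 1) (by norm_num) (by norm_num) zero_le_one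
      (by simp)).trans_eq (by norm_num)
  have hexp : Real.exp 3 ≤ 32 := by
    calc Real.exp 3 = Real.exp 1 ^ 3 := by rw [← Real.exp_nat_mul]; norm_num
      _ ≤ 2.7182818286 ^ 3 := by gcongr; exact Real.exp_one_lt_d9.le
      _ ≤ 32 := by norm_num
  calc _ ≤ ∏ i ∈ Finset.range J, (Real.exp ((2 / 3) ^ (J - 1 - i)) * (1 / 2)) :=
        Finset.prod_le_prod (fun i _ => by positivity) fun i _ => hfactor i
    _ = Real.exp (∑ i ∈ Finset.range J, (2 / 3 : ℝ) ^ (J - 1 - i)) / 2 ^ J := by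
        rw [Finset.prod_mul_distrib, ← Real.exp_sum, Finset.prod_const, Finset.card_range,
          one_div_pow, mul_one_div]
    _ ≤ 32 / 2 ^ J := by gcongr; exact (Real.exp_le_exp.mpr hsum).trans hexp

lemma card_biUnion_le_of_sampleSize {β : Type*} [DecidableEq β] {J : ℕ} {R : ℕ → Finset β}
    (hR : ∀ i < J, (R i).card ≤ sampleSize J i * 2 ^ i) :
    (((Finset.range J).biUnion R).card : ℝ) ≤ 4 * 2 ^ J := by
  calc (((Finset.range J).biUnion R).card : ℝ) ≤ ∑ i ∈ Finset.range J, ((R i).card : ℝ) :=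
        mod_cast Finset.card_biUnion_le
    _ ≤ (1 - 3 / 4)⁻¹ * 2 ^ J :=
        sum_range_le_of_le_geometric (by norm_num) (by norm_num) (by positivity) fun i hi =>
          le_trans (mod_cast hR i hi) (sampleSize_mul_two_pow_le hi)
    _ = 4 * 2 ^ J := by norm_num

lemma totalDegree_prod_interpolant_le {J : ℕ} {R : ℕ → Finset (ι → ℝ)}
    (hR : ∀ i < J, (R i).card ≤ sampleSize J i * 2 ^ i) :
    ((∏ i ∈ Finset.range J, interpolant (R i)).totalDegree : ℝ) ≤
      Fintype.card ι * (1 - (3 / 4 : ℝ) ^ (Fintype.card ι : ℝ)⁻¹)⁻¹ *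
        (2 ^ J : ℝ) ^ (Fintype.card ι : ℝ)⁻¹ := by
  set r : ℝ := (Fintype.card ι : ℝ)⁻¹ with hr
  have hr₀ : 0 < r := by positivity
  calc ((∏ i ∈ Finset.range J, interpolant (R i)).totalDegree : ℝ)
      ≤ ∑ i ∈ Finset.range J, ((interpolant (R i)).totalDegree : ℝ) :=
        mod_cast totalDegree_finsetProd _ _
    _ ≤ ∑ i ∈ Finset.range J, (Fintype.card ι : ℝ) * ((R i).card : ℝ) ^ r :=
        Finset.sum_le_sum fun i _ => totalDegree_le_of_mem_polySpace (interpolant_mem_polySpace _)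
    _ = Fintype.card ι * ∑ i ∈ Finset.range J, ((R i).card : ℝ) ^ r := by rw [Finset.mul_sum]
    _ ≤ Fintype.card ι * ((1 - (3 / 4 : ℝ) ^ r)⁻¹ * (2 ^ J : ℝ) ^ r) := by
        gcongr
        refine sum_range_le_of_le_geometric (by positivity)
          (Real.rpow_lt_one (by norm_num) (by norm_num) hr₀) (by positivity) fun i hi => ?_
        calc ((R i).card : ℝ) ^ r ≤ ((3 / 4) ^ (J - 1 - i) * 2 ^ J : ℝ) ^ r := by
              gcongr
              exact le_trans (mod_cast hR i hi) (sampleSize_mul_two_pow_le hi)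
          _ = ((3 / 4 : ℝ) ^ r) ^ (J - 1 - i) * (2 ^ J : ℝ) ^ r := by
              rw [Real.mul_rpow (by positivity) (by positivity), Real.rpow_pow_comm (by norm_num)]
    _ = _ := by ring

variable (ι) in
lemma exists_partition [DecidableEq (ι → ℝ)] [DecidableEq (Set (ι → ℝ))] :
    ∃ C : ℝ, 0 < C ∧ ∀ (S : Finset (ι → ℝ)), InGeneralPosition S → ∀ P : ℝ, 1 ≤ P →
      ∃ (G : MvPolynomial ι ℝ), ∃ S' ⊆ S, ((S \ S').card : ℝ) ≤ 4 * P ∧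
        (G.totalDegree : ℝ) ≤ C * P ^ (Fintype.card ι : ℝ)⁻¹ ∧ (∀ s ∈ S', eval s G ≠ 0) ∧
        ({q ∈ S'.offDiag | cell G q.1 = cell G q.2}.card : ℝ) * P ≤ 64 * (S.card : ℝ) ^ 2 := by
  set r : ℝ := (Fintype.card ι : ℝ)⁻¹ with hr
  have hq : 0 < 1 - (3 / 4 : ℝ) ^ r :=
    sub_pos.mpr (Real.rpow_lt_one (by norm_num) (by norm_num) (by positivity))
  refine ⟨Fintype.card ι * (1 - (3 / 4 : ℝ) ^ r)⁻¹, by positivity, fun S hS P hP => ?_⟩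
  obtain ⟨J, hJP, hPJ⟩ := exists_nat_pow_near hP one_lt_two
  obtain ⟨R, hR, hpairs⟩ := hS.halvesPairs.exists_iterate (sampleSize J) J
  have hRcard : ∀ i < J, (R i).card ≤ sampleSize J i * 2 ^ i := fun i hi => (hR i hi).2
  set S' := S \ (Finset.range J).biUnion R
  set G := ∏ i ∈ Finset.range J, interpolant (R i)
  have hG : ∀ s ∈ S', eval s G ≠ 0 := by
    intro s hs
    rw [Finset.mem_sdiff, Finset.mem_biUnion] at hs
    rw [map_prod, Finset.prod_ne_zero_iff]
    exact fun i hi hzero => hs.2 ⟨i, hi, hS _ (hR i (Finset.mem_range.mp hi)).1 s hs.1 hzero⟩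
  refine ⟨G, S', Finset.sdiff_subset, ?_, ?_, hG, ?_⟩
  · calc ((S \ S').card : ℝ) ≤ ((Finset.range J).biUnion R).card := by
          gcongr
          exact (Finset.sdiff_sdiff_self_left _ _).trans_subset Finset.inter_subset_right
      _ ≤ 4 * 2 ^ J := card_biUnion_le_of_sampleSize hRcard
      _ ≤ 4 * P := by gcongr
  · exact (totalDegree_prod_interpolant_le hRcard).trans (by gcongr)
  · have hcells : {q ∈ S'.offDiag | cell G q.1 = cell G q.2} ⊆ {q ∈ S'.offDiag | ∀ i < J,
        decide (0 < eval q.1 (interpolant (R i))) = decide (0 < eval q.2 (interpolant (R i)))} := by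
      refine Finset.monotone_filter_right _ fun q hq hcell i hi => ?_
      obtain ⟨hx, hy, -⟩ := Finset.mem_offDiag.mp hq
      exact decide_eq_decide.mpr (cell_eq_and_pos_iff_of_dvd
        (Finset.dvd_prod_of_mem _ (Finset.mem_range.mpr hi)) (hG _ hx) (hG _ hy) hcell).2
    calc ({q ∈ S'.offDiag | cell G q.1 = cell G q.2}.card : ℝ) * P
        ≤ (S.card : ℝ) ^ 2 * (32 / 2 ^ J) * 2 ^ (J + 1) := by
          gcongr
          exact (Nat.cast_le.mpr (Finset.card_le_card hcells)).trans
            (hpairs.trans (by gcongr; exact prod_sampleSize_le J))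
      _ = 64 * (S.card : ℝ) ^ 2 := by field_simp; ring

end Partition

section BalancedPartition

lemma card_mul_le_card_offDiag_filter {α β : Type*} [DecidableEq β] {κ : α → β}
    {S A : Finset α} (hA : A ⊆ S) {m : ℕ} (hm : ∀ x ∈ A, m < {y ∈ S | κ y = κ x}.card) :
    A.card * m ≤ {q ∈ S.offDiag | κ q.1 = κ q.2}.card := by
  classical
  have hfiber (x : α) (hx : x ∈ A) :
      m ≤ (({y ∈ S | κ y = κ x}.erase x).image (Prod.mk x)).card := by
    rw [Finset.card_image_of_injective _ (Prod.mk_right_injective x),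
      Finset.card_erase_of_mem (by simp [hA hx])]
    exact Nat.le_sub_one_of_lt (hm x hx)
  calc A.card * m ≤ ∑ x ∈ A, (({y ∈ S | κ y = κ x}.erase x).image (Prod.mk x)).card :=
        Finset.card_nsmul_le_sum _ _ _ hfiber
    _ = (A.biUnion fun x => ({y ∈ S | κ y = κ x}.erase x).image (Prod.mk x)).card := by
        rw [Finset.card_biUnion fun x _ x' _ hxx' => ?_]
        simp only [Finset.disjoint_left, Finset.mem_image]
        grind
    _ ≤ {q ∈ S.offDiag | κ q.1 = κ q.2}.card := by
        refine Finset.card_le_card fun q hq => ?_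
        simp only [Finset.mem_biUnion, Finset.mem_image, Finset.mem_erase, Finset.mem_filter,
          Finset.mem_offDiag] at hq ⊢
        grind

lemma exists_subset_forall_card_filter_le {α β : Type*} [DecidableEq α] [DecidableEq β] (κ : α → β)
    (S : Finset α) (k : ℕ) {m : ℕ} (hm : 0 < m) {δ : ℝ}
    (hpairs : ({q ∈ S.offDiag | κ q.1 = κ q.2}.card : ℝ) ≤ m * δ) :
    ∃ S' ⊆ S, (∀ s ∈ S', k ≤ {y ∈ S' | κ y = κ s}.card ∧ {y ∈ S' | κ y = κ s}.card ≤ m) ∧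
      ((S \ S').card : ℝ) ≤ k * (S.image κ).card + δ := by
  set S' := {s ∈ S | k ≤ {y ∈ S | κ y = κ s}.card ∧ {y ∈ S | κ y = κ s}.card ≤ m}
  set light := {s ∈ S | {y ∈ S | κ y = κ s}.card < k}
  set heavy := {s ∈ S | m < {y ∈ S | κ y = κ s}.card}
  refine ⟨S', Finset.filter_subset _ _, fun s hs => ?_, ?_⟩
  · have hclass : {y ∈ S' | κ y = κ s} = {y ∈ S | κ y = κ s} := by
      rw [Finset.filter_filter]
      refine Finset.filter_congr fun y _ => ⟨And.right, fun h => ⟨?_, h⟩⟩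
      simpa only [h] using (Finset.mem_filter.mp hs).2
    rw [hclass]
    exact (Finset.mem_filter.mp hs).2
  · have hlight : light.card ≤ k * (S.image κ).card := by
      refine (Finset.card_le_mul_card_image (f := κ) _ k fun z hz => ?_).trans
        (Nat.mul_le_mul_left k (Finset.card_le_card
          (Finset.image_subset_image (Finset.filter_subset _ _))))
      obtain ⟨x, hx, rfl⟩ := Finset.mem_image.mp hz
      refine le_trans (Finset.card_le_card ?_) (Finset.mem_filter.mp hx).2.le
      exact Finset.filter_subset_filter _ (Finset.filter_subset _ _)
    have hheavy : (heavy.card : ℝ) ≤ δ := by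
      refine le_of_mul_le_mul_right ?_ (Nat.cast_pos.mpr hm)
      rw [mul_comm δ]
      refine le_trans ?_ hpairs
      exact_mod_cast card_mul_le_card_offDiag_filter (Finset.filter_subset _ _)
        fun x hx => (Finset.mem_filter.mp hx).2
    have hsub : S \ S' ⊆ light ∪ heavy := by
      intro s hs
      simp only [S', light, heavy, Finset.mem_sdiff, Finset.mem_union, Finset.mem_filter] at hs ⊢
      grind
    have hcard := (Finset.card_le_card hsub).trans (Finset.card_union_le _ _)
    calc ((S \ S').card : ℝ) ≤ light.card + heavy.card := mod_cast hcard
      _ ≤ k * (S.image κ).card + δ := add_le_add (mod_cast hlight) hheavy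

variable {ι : Type*} [Fintype ι] [Nonempty ι]

lemma card_image_cell_le_mul [DecidableEq (Set (ι → ℝ))] {G : MvPolynomial ι ℝ}
    {S : Finset (ι → ℝ)} (hS : ∀ s ∈ S, eval s G ≠ 0) {C P : ℝ} (hP : 1 ≤ P)
    (hG : (G.totalDegree : ℝ) ≤ C * P ^ (Fintype.card ι : ℝ)⁻¹) :
    ((S.image (cell G)).card : ℝ) ≤
      (Fintype.card ι * (2 * C + 2) + 1) ^ Fintype.card ι * P := by
  set n := Fintype.card ι
  have hroot : 1 ≤ P ^ (n : ℝ)⁻¹ := Real.one_le_rpow hP (by positivity)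
  calc ((S.image (cell G)).card : ℝ) ≤ (n * (2 * G.totalDegree + 2) + 1) ^ n :=
        mod_cast card_image_cell_le hS
    _ ≤ (n * (2 * (C * P ^ (n : ℝ)⁻¹) + 2 * P ^ (n : ℝ)⁻¹) + P ^ (n : ℝ)⁻¹) ^ n := by
        gcongr; linarith
    _ = (n * (2 * C + 2) + 1) ^ n * (P ^ (n : ℝ)⁻¹) ^ n := by rw [← mul_pow]; ring
    _ = (n * (2 * C + 2) + 1) ^ n * P := by
        rw [Real.rpow_inv_natCast_pow (by positivity) (Fintype.card_ne_zero)]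

variable (ι) in
lemma exists_balanced_partition [DecidableEq (ι → ℝ)] [DecidableEq (Set (ι → ℝ))] (k : ℕ) :
    ∃ C : ℝ, 0 < C ∧ ∃ c : ℝ, 0 < c ∧ c ≤ 1 ∧
      ∀ (S : Finset (ι → ℝ)), InGeneralPosition S → ∀ P : ℝ, 1 ≤ P → P ≤ c * S.card →
      ∃ (G : MvPolynomial ι ℝ), ∃ S' ⊆ S, 2 * (S \ S').card ≤ S.card ∧
        (G.totalDegree : ℝ) ≤ C * P ^ (Fintype.card ι : ℝ)⁻¹ ∧ (∀ s ∈ S', eval s G ≠ 0) ∧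
        ∀ s ∈ S', k ≤ {y ∈ S' | cell G y = cell G s}.card ∧
          ({y ∈ S' | cell G y = cell G s}.card : ℝ) ≤ C * (S.card / P) := by
  obtain ⟨C, hC, hpartition⟩ := exists_partition ι
  set M : ℝ := (Fintype.card ι * (2 * C + 2) + 1) ^ Fintype.card ι
  have hM : 0 < M := by positivity
  refine ⟨C + 513, by positivity, (16 + 4 * (k * M))⁻¹, by positivity,
    inv_le_one_of_one_le₀ (by linarith [show 0 ≤ k * M by positivity]), fun S hS P hP hPS => ?_⟩
  rw [inv_mul_eq_div, le_div_iff₀' (by positivity)] at hPS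
  obtain ⟨G, S₁, hS₁, hremoved, hdeg, hG, hpairs⟩ := hpartition S hS P hP
  have hkM : 0 ≤ k * (M * P) := by positivity
  set m := ⌈512 * (S.card / P)⌉₊
  have hSP : 1 ≤ (S.card : ℝ) / P := (one_le_div (by positivity)).mpr (by linarith)
  have hm : 512 * (S.card / P) ≤ m := Nat.le_ceil _
  have hm' : (m : ℝ) ≤ 513 * (S.card / P) :=
    (Nat.ceil_lt_add_one (by positivity)).le.trans (by linarith)
  have hpairs' : ({q ∈ S₁.offDiag | cell G q.1 = cell G q.2}.card : ℝ) ≤ m * (S.card / 8) := by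
    rw [← le_div_iff₀ (by positivity)] at hpairs
    calc _ ≤ 64 * (S.card : ℝ) ^ 2 / P := hpairs
      _ = 512 * (S.card / P) * (S.card / 8) := by ring
      _ ≤ m * (S.card / 8) := by gcongr
  obtain ⟨S', hS', hclass, hcard⟩ := exists_subset_forall_card_filter_le (cell G) S₁ k
    (Nat.ceil_pos.mpr (by positivity)) hpairs'
  have hremoved' : ((S₁ \ S').card : ℝ) ≤ k * (M * P) + S.card / 8 :=
    hcard.trans (by gcongr; exact card_image_cell_le_mul hG hP hdeg)
  refine ⟨G, S', hS'.trans hS₁, ?_, ?_, fun s hs => hG s (hS' hs), fun s hs => ?_⟩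
  · have hsplit : (S \ S').card ≤ (S \ S₁).card + (S₁ \ S').card := by
      rw [← Finset.sdiff_union_sdiff_cancel hS₁ hS']
      exact Finset.card_union_le _ _
    have hsplit' : ((S \ S').card : ℝ) ≤ (S \ S₁).card + (S₁ \ S').card := mod_cast hsplit
    exact_mod_cast (by linarith : 2 * ((S \ S').card : ℝ) ≤ S.card)
  · exact hdeg.trans (by gcongr; linarith)
  · exact ⟨(hclass s hs).1, (Nat.cast_le.mpr (hclass s hs).2).trans
      (hm'.trans (by gcongr; linarith))⟩

end BalancedPartition

section Incidences

variable {α β γ : Type*} {r : α → β → Prop} {S S' : Finset α} {T T' : Finset β} {k b : ℕ}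

open Classical in
/-- The number of pairs in `S × T` related by `r`; for `r = (· ∈ ·)` this is `incCountAbs`. -/
def incidenceCount (r : α → β → Prop) (S : Finset α) (T : Finset β) : ℕ :=
  ∑ t ∈ T, {s ∈ S | r s t}.card

lemma incCountAbs_eq_incidenceCount (S : Finset α) (T : Finset (Set α)) :
    incCountAbs S T = incidenceCount (fun s t => s ∈ t) S T := by
  classical
  refine Finset.sum_congr rfl fun t _ => ?_
  rw [← Set.ncard_coe_finset, Finset.coe_filter]
  rfl

lemma incidenceCount_eq_add_sdiff [DecidableEq α] (h : S' ⊆ S) :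
    incidenceCount r S T = incidenceCount r S' T + incidenceCount r (S \ S') T := by
  classical
  simp only [incidenceCount, ← Finset.sum_add_distrib]
  refine Finset.sum_congr rfl fun t _ => ?_
  rw [← Finset.card_union_of_disjoint (Finset.disjoint_filter_filter Finset.disjoint_sdiff),
    ← Finset.filter_union, Finset.union_sdiff_of_subset h]

lemma incidenceCount_eq_sum_image [DecidableEq γ] (κ : α → γ) :
    incidenceCount r S T = ∑ c ∈ S.image κ, incidenceCount r {s ∈ S | κ s = c} T := by
  classical
  simp only [incidenceCount]
  rw [Finset.sum_comm]
  refine Finset.sum_congr rfl fun t _ => ?_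
  rw [Finset.card_eq_sum_card_fiberwise (f := κ) (t := S.image κ)]
  · simp only [Finset.filter_filter, and_comm]
  · exact fun s hs => Finset.mem_image_of_mem κ (Finset.mem_filter.mp hs).1

lemma KBFree.mono (h : KBFree r S T k b) (hS : S' ⊆ S) (hT : T' ⊆ T) : KBFree r S' T' k b :=
  fun ⟨P, B, hP, hB, hPB⟩ => h ⟨P, B, hP.trans hS, hB.trans hT, hPB⟩

lemma KBFree.card_le_of_forall (h : KBFree r S T k b) (hk : k ≤ S.card)
    (hST : ∀ s ∈ S, ∀ t ∈ T, r s t) : T.card ≤ b := by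
  by_contra! hb
  obtain ⟨P, hP, hPk⟩ := Finset.exists_subset_card_eq hk
  obtain ⟨B, hB, hBb⟩ := Finset.exists_subset_card_eq hb.le
  exact h ⟨P, B, hP, hB, hPk, hBb, fun s hs t ht => hST s (hP hs) t (hB ht)⟩

lemma le_add_choose (hk : 0 < k) (d : ℕ) : d ≤ k + d.choose k := by
  obtain ⟨k, rfl⟩ := Nat.exists_eq_succ_of_ne_zero hk.ne'
  induction d with
  | zero => simp
  | succ d ih =>
    obtain hd | hd := lt_or_ge d k.succ
    · omega
    · have := Nat.choose_pos (Nat.le_of_succ_le hd)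
      rw [Nat.choose_succ_succ]
      omega

/- The Kővári–Sós–Turán bound: double count the `k`-subsets of `S` related to a common `t`. -/
lemma KBFree.incidenceCount_le (h : KBFree r S T k b) (hk : 0 < k) :
    incidenceCount r S T ≤ k * T.card + b * S.card ^ k := by
  classical
  have hcommon : ∀ P ∈ S.powersetCard k, {t ∈ T | ∀ s ∈ P, r s t}.card ≤ b := by
    intro P hP
    obtain ⟨hPS, hPk⟩ := Finset.mem_powersetCard.mp hP
    exact (h.mono hPS (Finset.filter_subset _ _)).card_le_of_forall hPk.ge
      fun s hs t ht => (Finset.mem_filter.mp ht).2 s hs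
  have hcount : ∑ t ∈ T, ({s ∈ S | r s t}.card).choose k =
      ∑ P ∈ S.powersetCard k, {t ∈ T | ∀ s ∈ P, r s t}.card := by
    have hsubsets : ∀ t, {s ∈ S | r s t}.powersetCard k =
        {P ∈ S.powersetCard k | ∀ s ∈ P, r s t} := by
      intro t
      ext P
      simp only [Finset.mem_powersetCard, Finset.mem_filter, Finset.subset_iff]
      grind
    simp only [← Finset.card_powersetCard, hsubsets]
    exact Finset.sum_card_bipartiteAbove_eq_sum_card_bipartiteBelow fun t P => ∀ s ∈ P, r s t
  calc incidenceCount r S T ≤ ∑ t ∈ T, (k + ({s ∈ S | r s t}.card).choose k) :=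
        Finset.sum_le_sum fun t _ => le_add_choose hk _
    _ = k * T.card + ∑ P ∈ S.powersetCard k, {t ∈ T | ∀ s ∈ P, r s t}.card := by
        rw [Finset.sum_add_distrib, hcount, Finset.sum_const, smul_eq_mul, mul_comm]
    _ ≤ k * T.card + (S.powersetCard k).card * b := by
        gcongr
        exact Finset.sum_le_card_nsmul _ _ _ hcommon
    _ ≤ k * T.card + b * S.card ^ k := by
        rw [Finset.card_powersetCard, mul_comm _ b]
        gcongr
        exact Nat.choose_le_pow _ _

/-- Some but not all points of `A` are related to `t`. -/
def Crosses (r : α → β → Prop) (A : Finset α) (t : β) : Prop :=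
  (∃ s ∈ A, r s t) ∧ ∃ s ∈ A, ¬ r s t

open Classical in
lemma KBFree.incidenceCount_le_of_le_card (h : KBFree r S T k b) (hk : 0 < k) (hS : k ≤ S.card) :
    incidenceCount r S T ≤ k * {t ∈ T | Crosses r S t}.card + b * S.card ^ k + b * S.card := by
  set full := {t ∈ T | ∀ s ∈ S, r s t}
  have hfull : full.card ≤ b :=
    (h.mono subset_rfl (Finset.filter_subset _ _)).card_le_of_forall hS
      fun s hs t ht => (Finset.mem_filter.mp ht).2 s hs
  have hsplit : incidenceCount r S T ≤
      incidenceCount r S {t ∈ T | Crosses r S t} + incidenceCount r S full := by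
    simp only [incidenceCount, full, Finset.sum_filter, ← Finset.sum_add_distrib]
    refine Finset.sum_le_sum fun t _ => ?_
    by_cases hall : ∀ s ∈ S, r s t
    · rw [if_pos hall]
      exact Nat.le_add_left _ _
    by_cases hcross : Crosses r S t
    · rw [if_pos hcross]
      exact Nat.le_add_right _ _
    · have hnone : {s ∈ S | r s t} = ∅ := by
        simp only [Crosses, not_and_or] at hcross
        push Not at hall hcross
        grind
      simp [hnone]
  calc _ ≤ incidenceCount r S {t ∈ T | Crosses r S t} + full.card * S.card := by
        refine hsplit.trans (Nat.add_le_add_left ?_ _)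
        exact Finset.sum_le_card_nsmul _ _ _ fun t _ => Finset.card_filter_le _ _
    _ ≤ _ := Nat.add_le_add ((h.mono subset_rfl (Finset.filter_subset _ _)).incidenceCount_le hk)
        (Nat.mul_le_mul_right _ hfull)

open Classical in
lemma KBFree.incidenceCount_le_sum_crosses (h : KBFree r S T k b) (hk : 0 < k) (κ : α → γ) {M : ℝ}
    (hκ : ∀ s ∈ S, k ≤ {y ∈ S | κ y = κ s}.card ∧ ({y ∈ S | κ y = κ s}.card : ℝ) ≤ M) :
    (incidenceCount r S T : ℝ) ≤
      k * ∑ t ∈ T, ({c ∈ S.image κ | Crosses r {s ∈ S | κ s = c} t}.card : ℝ) +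
        b * (M ^ (k - 1) * S.card) + b * S.card := by
  set A : γ → Finset α := fun c => {s ∈ S | κ s = c} with hA
  have hAk : ∀ c ∈ S.image κ, k ≤ (A c).card ∧ ((A c).card : ℝ) ≤ M := by
    simpa only [Finset.forall_mem_image] using hκ
  have hcard : ∑ c ∈ S.image κ, (A c).card = S.card :=
    (Finset.card_eq_sum_card_image κ S).symm
  have hpow : ∑ c ∈ S.image κ, ((A c).card : ℝ) ^ k ≤ M ^ (k - 1) * S.card := by
    rw [← hcard, Nat.cast_sum, Finset.mul_sum]
    refine Finset.sum_le_sum fun c hc => ?_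
    rw [← pow_sub_one_mul hk.ne']
    gcongr
    exact (hAk c hc).2
  have hcross : ∑ c ∈ S.image κ, {t ∈ T | Crosses r (A c) t}.card =
      ∑ t ∈ T, {c ∈ S.image κ | Crosses r (A c) t}.card :=
    Finset.sum_card_bipartiteAbove_eq_sum_card_bipartiteBelow fun c t => Crosses r (A c) t
  have hsum : incidenceCount r S T ≤ ∑ c ∈ S.image κ,
      (k * {t ∈ T | Crosses r (A c) t}.card + b * (A c).card ^ k + b * (A c).card) := by
    rw [incidenceCount_eq_sum_image κ]
    exact Finset.sum_le_sum fun c hc => (h.mono (Finset.filter_subset _ _)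
      subset_rfl).incidenceCount_le_of_le_card hk (hAk c hc).1
  rw [Finset.sum_add_distrib, Finset.sum_add_distrib, ← Finset.mul_sum, ← Finset.mul_sum,
    ← Finset.mul_sum, hcross, hcard] at hsum
  calc (incidenceCount r S T : ℝ)
      ≤ k * ∑ t ∈ T, ({c ∈ S.image κ | Crosses r (A c) t}.card : ℝ) +
        b * ∑ c ∈ S.image κ, ((A c).card : ℝ) ^ k + b * S.card := mod_cast hsum
    _ ≤ _ := by gcongr

end Incidences

section RobustIncidences

variable {ι : Type*}

lemma exists_cell_eq_and_eval_eq {G f : MvPolynomial ι ℝ} {w x y : ι → ℝ}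
    (hx : x ∈ cell G w) (hy : y ∈ cell G w) {v : ℝ} (hv : v ∈ Icc (eval x f) (eval y f)) :
    ∃ z, eval z G ≠ 0 ∧ cell G z = cell G w ∧ eval z f = v := by
  obtain ⟨z, hz, hzv⟩ := isPreconnected_connectedComponentIn.intermediate_value hx hy
    (MvPolynomial.continuous_eval f).continuousOn hv
  exact ⟨z, connectedComponentIn_subset _ _ hz, (connectedComponentIn_eq hz).symm, hzv⟩

/-- The product of the `f - 2j` for `j < q`; its zero set consists of `q` level sets of `f`. -/
def levelProduct (f : MvPolynomial ι ℝ) (q : ℕ) : MvPolynomial ι ℝ :=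
  ∏ j ∈ Finset.range q, (f - C (2 * j : ℝ))

lemma totalDegree_levelProduct_le (f : MvPolynomial ι ℝ) (q : ℕ) :
    (levelProduct f q).totalDegree ≤ q * f.totalDegree := by
  refine (totalDegree_finsetProd _ _).trans ?_
  refine (Finset.sum_le_card_nsmul _ _ f.totalDegree fun i _ => ?_).trans_eq (by simp)
  exact totalDegree_sub_C_le _ _

lemma exists_cell_eq_and_eval_eq_odd {G f : MvPolynomial ι ℝ} {w x y : ι → ℝ}
    (hx : x ∈ cell G w) (hxf : eval x f < 0) (hy : y ∈ cell G w) {q : ℕ}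
    (hyf : 2 * (q : ℝ) < eval y f) {i : ℕ} (hi : i < q) :
    ∃ z, eval z (G * levelProduct f q) ≠ 0 ∧ cell G z = cell G w ∧ eval z f = 2 * i + 1 := by
  have hiq : (i : ℝ) + 1 ≤ q := mod_cast hi
  obtain ⟨z, hz, hzw, hzf⟩ := exists_cell_eq_and_eval_eq (v := 2 * i + 1) hx hy
    ⟨hxf.le.trans (by positivity), by linarith⟩
  refine ⟨z, ?_, hzw, hzf⟩
  rw [levelProduct, map_mul, map_prod, mul_ne_zero_iff, Finset.prod_ne_zero_iff]
  refine ⟨hz, fun j _ => ?_⟩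
  rw [map_sub, eval_C, hzf, sub_ne_zero]
  norm_cast
  omega

lemma le_of_cell_mul_levelProduct_eq {G f : MvPolynomial ι ℝ} {q i j : ℕ} {x y : ι → ℝ}
    (hi : i < q) (hx : eval x (G * levelProduct f q) ≠ 0) (hxf : eval x f = 2 * i + 1)
    (hy : eval y (G * levelProduct f q) ≠ 0) (hyf : eval y f = 2 * j + 1)
    (hxy : cell (G * levelProduct f q) x = cell (G * levelProduct f q) y) : i ≤ j := by
  have hdvd : f - C (2 * i : ℝ) ∣ G * levelProduct f q :=
    dvd_mul_of_dvd_right (Finset.dvd_prod_of_mem (fun j : ℕ => f - C (2 * j : ℝ))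
      (Finset.mem_range.mpr hi)) G
  have hside := (cell_eq_and_pos_iff_of_dvd hdvd hx hy hxy).2
  rw [map_sub, map_sub, eval_C, eval_C, hxf, hyf] at hside
  have hpos : (2 * i : ℝ) < 2 * j + 1 := sub_pos.mp (hside.mp (by linarith))
  norm_cast at hpos
  omega

variable [Fintype ι]

/- On each of the given cells `f` takes the values `1, 3, …, 2q - 1`, so removing the zeros of
`levelProduct f q` cuts it into at least `q` cells. -/
lemma card_mul_le_of_forall_eval_lt {G f : MvPolynomial ι ℝ} {q : ℕ} {W : Finset (Set (ι → ℝ))}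
    (hW : ∀ c ∈ W, (∃ w, cell G w = c) ∧ (∃ x ∈ c, eval x f < 0) ∧
      ∃ y ∈ c, 2 * (q : ℝ) < eval y f) :
    W.card * q ≤ (Fintype.card ι * (2 * (G.totalDegree + q * f.totalDegree) + 2) + 1) ^
      Fintype.card ι := by
  classical
  set H := G * levelProduct f q
  have hlevel : ∀ p ∈ W ×ˢ Finset.range q,
      ∃ z, eval z H ≠ 0 ∧ cell G z = p.1 ∧ eval z f = 2 * p.2 + 1 := by
    rintro ⟨c, i⟩ hp
    obtain ⟨hc, hi⟩ := Finset.mem_product.mp hp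
    obtain ⟨⟨w, rfl⟩, ⟨x, hx, hxf⟩, y, hy, hyf⟩ := hW c hc
    exact exists_cell_eq_and_eval_eq_odd hx hxf hy hyf (Finset.mem_range.mp hi)
  choose! z hzH hzG hzf using hlevel
  have hle : ∀ p ∈ W ×ˢ Finset.range q, ∀ p' ∈ W ×ˢ Finset.range q,
      cell H (z p) = cell H (z p') → p.2 ≤ p'.2 := fun p hp p' hp' =>
    le_of_cell_mul_levelProduct_eq (Finset.mem_range.mp (Finset.mem_product.mp hp).2)
      (hzH p hp) (hzf p hp) (hzH p' hp') (hzf p' hp')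
  have hinj : ∀ p ∈ W ×ˢ Finset.range q, ∀ p' ∈ W ×ˢ Finset.range q,
      cell H (z p) = cell H (z p') → p = p' := by
    intro p hp p' hp' hcell
    refine Prod.ext ?_ ((hle p hp p' hp' hcell).antisymm (hle p' hp' p hp hcell.symm))
    rw [← hzG p hp, ← hzG p' hp']
    exact (cell_eq_and_pos_iff_of_dvd (dvd_mul_right G _) (hzH p hp) (hzH p' hp') hcell).1
  have hdeg : H.totalDegree ≤ G.totalDegree + q * f.totalDegree :=
    (totalDegree_mul _ _).trans (Nat.add_le_add_left (totalDegree_levelProduct_le f q) _)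
  calc W.card * q = ((W ×ˢ Finset.range q).image z).card := by
        rw [Finset.card_image_of_injOn fun p hp p' hp' h => hinj p hp p' hp' (by rw [h]),
          Finset.card_product, Finset.card_range]
    _ ≤ (Fintype.card ι * (2 * H.totalDegree + 2) + 1) ^ Fintype.card ι := by
        refine card_le_of_injOn_cell (G := H) ?_ ?_
        · exact Finset.forall_mem_image.mpr hzH
        · simp only [InjOn, Finset.mem_coe, Finset.forall_mem_image]
          exact fun p hp p' hp' h => congrArg z (hinj p hp p' hp' h)
    _ ≤ _ := by gcongr

variable [Nonempty ι]

lemma card_le_of_forall_eval_lt {G f : MvPolynomial ι ℝ} {W : Finset (Set (ι → ℝ))} {K P : ℝ}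
    {D : ℕ} (hW : ∀ c ∈ W, (∃ w, cell G w = c) ∧ (∃ x ∈ c, eval x f < 0) ∧
      ∃ y ∈ c, 1 < eval y f) (hP : 1 ≤ P)
    (hG : (G.totalDegree : ℝ) ≤ K * P ^ (Fintype.card ι : ℝ)⁻¹) (hf : f.totalDegree ≤ D) :
    (W.card : ℝ) ≤ (Fintype.card ι * (2 * (K + 2 * D) + 2) + 1) ^ Fintype.card ι *
      P ^ (1 - (Fintype.card ι : ℝ)⁻¹) := by
  set n := Fintype.card ι
  set ρ := P ^ (n : ℝ)⁻¹ with hρ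
  set q := ⌈ρ⌉₊
  have hρ₁ : 1 ≤ ρ := Real.one_le_rpow hP (by positivity)
  have hq : (q : ℝ) ≤ 2 * ρ := Nat.ceil_le_two_mul (by linarith)
  have hq₀ : (0 : ℝ) < 2 * q := by have := Nat.le_ceil ρ; linarith
  have hcount := card_mul_le_of_forall_eval_lt (f := C (2 * q : ℝ) * f) (q := q) (W := W)
    (G := G) fun c hc => by
      obtain ⟨hcell, ⟨x, hx, hxf⟩, y, hy, hyf⟩ := hW c hc
      refine ⟨hcell, ⟨x, hx, ?_⟩, y, hy, ?_⟩
      · rw [map_mul, eval_C]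
        exact mul_neg_of_pos_of_neg hq₀ hxf
      · rw [map_mul, eval_C]
        exact lt_mul_of_one_lt_right hq₀ hyf
  have hdeg : (C (2 * q : ℝ) * f).totalDegree ≤ D := by
    refine (totalDegree_mul _ _).trans ?_
    rwa [totalDegree_C, zero_add]
  have hmul : (W.card : ℝ) * ρ ≤ (n * (2 * (K + 2 * D) + 2) + 1) ^ n * P := by
    calc (W.card : ℝ) * ρ ≤ W.card * q := by gcongr; exact Nat.le_ceil ρ
      _ ≤ (n * (2 * (G.totalDegree + q * D) + 2) + 1) ^ n := by
          exact_mod_cast hcount.trans (by gcongr)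
      _ ≤ (n * (2 * (K * ρ + 2 * ρ * D) + 2 * ρ) + ρ) ^ n := by gcongr; linarith
      _ = (n * (2 * (K + 2 * D) + 2) + 1) ^ n * ρ ^ n := by rw [← mul_pow]; ring
      _ = _ := by rw [hρ, Real.rpow_inv_natCast_pow (by positivity) Fintype.card_ne_zero]
  rw [Real.rpow_sub (by positivity), Real.rpow_one, ← mul_div_assoc]
  exact (le_div_iff₀ (by positivity)).mpr hmul

open Classical in
lemma card_crossed_cells_le {β : Type*} {G : MvPolynomial ι ℝ} {f : β → MvPolynomial ι ℝ}
    {S : Finset (ι → ℝ)} {t : β} {K P : ℝ} {D : ℕ} (hGS : ∀ s ∈ S, eval s G ≠ 0)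
    (hsep : ∀ s ∈ S, eval s (f t) < 0 ∨ 1 < eval s (f t)) (hP : 1 ≤ P)
    (hG : (G.totalDegree : ℝ) ≤ K * P ^ (Fintype.card ι : ℝ)⁻¹) (hf : (f t).totalDegree ≤ D) :
    ({c ∈ S.image (cell G) | Crosses (fun s t => eval s (f t) < 0)
      {s ∈ S | cell G s = c} t}.card : ℝ) ≤
      (Fintype.card ι * (2 * (K + 2 * D) + 2) + 1) ^ Fintype.card ι *
        P ^ (1 - (Fintype.card ι : ℝ)⁻¹) := by
  refine card_le_of_forall_eval_lt (G := G) (f := f t) (fun c hc => ?_) hP hG hf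
  obtain ⟨-, ⟨x, hx, hxf⟩, y, hy, hyf⟩ := Finset.mem_filter.mp hc
  obtain ⟨hxS, rfl⟩ := Finset.mem_filter.mp hx
  obtain ⟨hyS, hxy⟩ := Finset.mem_filter.mp hy
  refine ⟨⟨x, rfl⟩, ⟨x, mem_connectedComponentIn (hGS x hxS), hxf⟩, y, ?_,
    (hsep y hyS).resolve_left hyf⟩
  rw [← hxy]
  exact mem_connectedComponentIn (hGS y hyS)

variable (ι) in
lemma exists_subset_incidenceCount_le (β : Type*) [DecidableEq (ι → ℝ)] {k : ℕ} (hk : 0 < k)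
    (D b : ℕ) :
    ∃ K : ℝ, 0 < K ∧ ∃ c : ℝ, 0 < c ∧ c ≤ 1 ∧
      ∀ (S : Finset (ι → ℝ)) (T : Finset β) (f : β → MvPolynomial ι ℝ), InGeneralPosition S →
      (∀ t ∈ T, (f t).totalDegree ≤ D) →
      (∀ s ∈ S, ∀ t ∈ T, eval s (f t) < 0 ∨ 1 < eval s (f t)) →
      KBFree (fun s t => eval s (f t) < 0) S T k b → ∀ P : ℝ, 1 ≤ P → P ≤ c * S.card →
      ∃ S' ⊆ S, 2 * (S \ S').card ≤ S.card ∧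
        (incidenceCount (fun s t => eval s (f t) < 0) S' T : ℝ) ≤
          K * (T.card * P ^ (1 - (Fintype.card ι : ℝ)⁻¹) +
            S.card * (S.card / P) ^ (k - 1) + S.card) := by
  classical
  obtain ⟨M, hM, c, hc₀, hc₁, hpartition⟩ := exists_balanced_partition ι k
  set A : ℝ := (Fintype.card ι * (2 * (M + 2 * D) + 2) + 1) ^ Fintype.card ι
  refine ⟨k * A + b * M ^ (k - 1) + b + 1, by positivity, c, hc₀, hc₁,
    fun S T f hS hD hsep hfree P hP hPS => ?_⟩
  obtain ⟨G, S', hS', hcard, hdeg, hG, hcells⟩ := hpartition S hS P hP hPS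
  refine ⟨S', hS', hcard, ?_⟩
  have hcrossed : ∀ t ∈ T, ({c ∈ S'.image (cell G) | Crosses (fun s t => eval s (f t) < 0)
      {s ∈ S' | cell G s = c} t}.card : ℝ) ≤ A * P ^ (1 - (Fintype.card ι : ℝ)⁻¹) := fun t ht =>
    card_crossed_cells_le hG (fun s hs => hsep s (hS' hs) t ht) hP hdeg (hD t ht)
  have hcount := (hfree.mono hS' subset_rfl).incidenceCount_le_sum_crosses hk (cell G) hcells
  set N : ℝ := T.card * P ^ (1 - (Fintype.card ι : ℝ)⁻¹)
  set Q : ℝ := S.card * (S.card / P) ^ (k - 1)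
  have hcross : (k : ℝ) * ∑ t ∈ T, ({c ∈ S'.image (cell G) | Crosses
      (fun s t => eval s (f t) < 0) {s ∈ S' | cell G s = c} t}.card : ℝ) ≤ k * A * N := by
    rw [mul_assoc, mul_left_comm A, ← nsmul_eq_mul T.card]
    gcongr
    exact Finset.sum_le_card_nsmul _ _ _ hcrossed
  have hS'S : (S'.card : ℝ) ≤ S.card := mod_cast Finset.card_le_card hS'
  have hinside : b * ((M * (S.card / P)) ^ (k - 1) * S'.card) ≤ b * M ^ (k - 1) * Q := by
    calc b * ((M * (S.card / P)) ^ (k - 1) * S'.card)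
        ≤ b * ((M * (S.card / P)) ^ (k - 1) * S.card) := by gcongr
      _ = b * M ^ (k - 1) * Q := by rw [mul_pow]; ring
  have hA : 0 ≤ k * A := by positivity
  have hM' : 0 ≤ b * M ^ (k - 1) := by positivity
  have hb : (0 : ℝ) ≤ b := Nat.cast_nonneg b
  calc _ ≤ k * A * N + b * M ^ (k - 1) * Q + b * S.card :=
        hcount.trans (add_le_add (add_le_add hcross hinside) (by gcongr))
    _ ≤ (k * A + b * M ^ (k - 1) + b + 1) * N + (k * A + b * M ^ (k - 1) + b + 1) * Q +
        (k * A + b * M ^ (k - 1) + b + 1) * S.card := by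
        gcongr <;> linarith
    _ = _ := by ring

end RobustIncidences

section MainTerm

lemma natCast_mul_sub_one_pos {k n : ℕ} (hk : 0 < k) (hn : 2 ≤ n) : (0 : ℝ) < n * k - 1 := by
  have : (2 : ℝ) * 1 ≤ n * k := by gcongr <;> exact_mod_cast ‹_›
  linarith

lemma alpha_of_two_le (k : ℕ) {n : ℕ} (hn : 2 ≤ n) :
    alpha k n = k * (n - 1) / (n * k - 1) := if_neg fun h => by omega

lemma beta_of_two_le (k : ℕ) {n : ℕ} (hn : 2 ≤ n) :
    beta k n = n * (k - 1) / (n * k - 1) := if_neg fun h => by omega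

lemma alpha_pos {k n : ℕ} (hk : 0 < k) (hn : 2 ≤ n) : 0 < alpha k n := by
  rw [alpha_of_two_le k hn]
  have hn' : (2 : ℝ) ≤ n := mod_cast hn
  exact div_pos (mul_pos (mod_cast hk) (by linarith)) (natCast_mul_sub_one_pos hk hn)

/- The number of cells at which the two error terms of the partition balance. -/
lemma exists_pos_balancing {k n : ℕ} (hk : 0 < k) (hn : 2 ≤ n) {s N : ℝ} (hs : 0 < s)
    (hN : 0 < N) (hNs : N ≤ s ^ k) :
    ∃ x : ℝ, 1 ≤ x ∧ N * x ^ (1 - (n : ℝ)⁻¹) = s ^ alpha k n * N ^ beta k n ∧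
      s * (s / x) ^ (k - 1) = s ^ alpha k n * N ^ beta k n := by
  have hd := natCast_mul_sub_one_pos hk hn
  have hn₀ : (n : ℝ) ≠ 0 := by positivity
  refine ⟨(s ^ k / N) ^ (n / (n * k - 1) : ℝ),
    Real.one_le_rpow ((one_le_div hN).mpr hNs) (by positivity), ?_⟩
  obtain ⟨k, rfl⟩ := Nat.exists_eq_succ_of_ne_zero hk.ne'
  rw [alpha_of_two_le _ hn, beta_of_two_le _ hn, ← Real.exp_log hs, ← Real.exp_log hN]
  simp only [← Real.exp_nat_mul, ← Real.exp_sub, ← Real.exp_mul, ← Real.exp_add,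
    Nat.succ_eq_add_one, Nat.add_sub_cancel, Real.exp_eq_exp]
  push_cast at hd ⊢
  generalize hd' : (n : ℝ) * (k + 1) - 1 = d at hd ⊢
  constructor <;> field_simp
  · linear_combination -Real.log N * hd'
  · linear_combination -Real.log s * (k + 1) * hd'

lemma exists_balancing {k n : ℕ} (hk : 0 < k) (hn : 2 ≤ n) {c s N : ℝ} (hc₀ : 0 < c)
    (hc₁ : c ≤ 1) (hs : 1 ≤ c * s) (hN : 0 < N) (hNs : N ≤ s ^ k) :
    ∃ P : ℝ, 1 ≤ P ∧ P ≤ c * s ∧ N * P ^ (1 - (n : ℝ)⁻¹) ≤ s ^ alpha k n * N ^ beta k n ∧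
      s * (s / P) ^ (k - 1) ≤ c⁻¹ ^ (k - 1) * (s ^ alpha k n * N ^ beta k n + s) := by
  have hs₀ : 0 < s := pos_of_mul_pos_right (by linarith) hc₀.le
  obtain ⟨x, hx, hxN, hxs⟩ := exists_pos_balancing hk hn hs₀ hN hNs
  have hn' : (n : ℝ)⁻¹ ≤ 1 := inv_le_one_of_one_le₀ (by exact_mod_cast (by omega : 1 ≤ n))
  have hmin : 0 < min x s := lt_min (by linarith) hs₀
  refine ⟨max 1 (c * min x s), le_max_left _ _, max_le hs (by gcongr; exact min_le_right x s),
    ?_, ?_⟩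
  · rw [← hxN]
    gcongr
    exact max_le hx ((mul_le_of_le_one_left hmin.le hc₁).trans (min_le_left x s))
  · have hratio : (s / min x s) ^ (k - 1) ≤ (s / x) ^ (k - 1) + 1 := by
      obtain h | h := min_choice x s <;> rw [h]
      · linarith
      · rw [div_self hs₀.ne', one_pow]
        have : 0 ≤ (s / x) ^ (k - 1) := by positivity
        linarith
    calc s * (s / max 1 (c * min x s)) ^ (k - 1) ≤ s * (s / (c * min x s)) ^ (k - 1) := by
          gcongr; exact le_max_right _ _
      _ = c⁻¹ ^ (k - 1) * (s * (s / min x s) ^ (k - 1)) := by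
          rw [← div_div, div_right_comm, div_eq_inv_mul, mul_pow]; ring
      _ ≤ c⁻¹ ^ (k - 1) * (s * ((s / x) ^ (k - 1) + 1)) := by gcongr
      _ = _ := by rw [mul_add, hxs, mul_one]

/- Halving the number of points shrinks the main terms by a factor `θ < 1`, so the contributions of
the successive halvings add up to a geometric series. -/
lemma exists_add_mul_le_of_two_mul_le {a K : ℝ} (ha : 0 < a) (hK : 0 ≤ K) :
    ∃ L, K ≤ L ∧ ∀ {s s' G N : ℝ}, 0 ≤ s' → 0 ≤ G → 2 * s' ≤ s →
      K * (s ^ a * G + s) + L * (s' ^ a * G + N + s') ≤ L * (s ^ a * G + N + s) := by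
  set θ : ℝ := max ((1 / 2) ^ a) (1 / 2)
  have hθ₀ : 0 ≤ θ := by positivity
  have hθ₁ : 0 < 1 - θ :=
    sub_pos.mpr (max_lt (Real.rpow_lt_one (by norm_num) (by norm_num) ha) (by norm_num))
  have hKL : K ≤ K / (1 - θ) := le_div_self hK hθ₁ (by linarith)
  refine ⟨K / (1 - θ), hKL, fun {s s' G N} hs' hG hss => ?_⟩
  have hs₀ : 0 ≤ s := by linarith
  have : 0 ≤ K / (1 - θ) := hK.trans hKL
  have hs : s' ≤ θ * s := by
    calc s' ≤ 1 / 2 * s := by linarith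
      _ ≤ θ * s := by gcongr; exact le_max_right _ _
  have hpow : s' ^ a ≤ θ * s ^ a := by
    calc s' ^ a ≤ (1 / 2 * s) ^ a := by gcongr; linarith
      _ = (1 / 2) ^ a * s ^ a := Real.mul_rpow (by norm_num) hs₀
      _ ≤ θ * s ^ a := by gcongr; exact le_max_left _ _
  calc _ ≤ K * (s ^ a * G + s) + K / (1 - θ) * (θ * s ^ a * G + N + θ * s) := by gcongr
    _ = K / (1 - θ) * (s ^ a * G + N + s) := by field_simp; ring

end MainTerm

section GeneralPositionBound

variable {ι β : Type*} [Fintype ι] {k b : ℕ}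

lemma KBFree.incidenceCount_le_linear {α : Type*} {r : α → β → Prop} {S : Finset α} {T : Finset β}
    (h : KBFree r S T k b) (hk : 0 < k) {c : ℝ} (hc₀ : 0 < c) (hc₁ : c ≤ 1)
    (hST : (S.card : ℝ) ^ k ≤ T.card ∨ c * S.card ≤ 1) :
    (incidenceCount r S T : ℝ) ≤ (k + b * c⁻¹ ^ (k - 1)) * (T.card + S.card) := by
  have hcount : (incidenceCount r S T : ℝ) ≤ k * T.card + b * S.card ^ k :=
    mod_cast h.incidenceCount_le hk
  have hpow : (S.card : ℝ) ^ k ≤ c⁻¹ ^ (k - 1) * (T.card + S.card) := by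
    obtain hlarge | hsmall := hST
    · calc (S.card : ℝ) ^ k ≤ 1 * (T.card + S.card) := by
            rw [one_mul]; exact hlarge.trans (by simp)
        _ ≤ _ := by gcongr; exact one_le_pow₀ ((one_le_inv₀ hc₀).mpr hc₁)
    · calc (S.card : ℝ) ^ k = S.card ^ (k - 1) * S.card := (pow_sub_one_mul hk.ne' _).symm
        _ ≤ c⁻¹ ^ (k - 1) * (T.card + S.card) := by
            gcongr
            · rwa [← one_div, le_div_iff₀' hc₀]
            · simp
  calc (incidenceCount r S T : ℝ)
      ≤ k * (T.card + S.card) + b * (c⁻¹ ^ (k - 1) * (T.card + S.card)) := by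
        refine hcount.trans ?_
        gcongr
        simp
    _ = _ := by ring

variable (ι β) [Nonempty ι]

lemma exists_incidenceCount_le_or_halving (hk : 0 < k) (hι : 2 ≤ Fintype.card ι) (D b : ℕ) :
    ∃ K : ℝ, 0 < K ∧ ∀ (S : Finset (ι → ℝ)) (T : Finset β) (f : β → MvPolynomial ι ℝ),
      InGeneralPosition S → (∀ t ∈ T, (f t).totalDegree ≤ D) →
      (∀ s ∈ S, ∀ t ∈ T, eval s (f t) < 0 ∨ 1 < eval s (f t)) →
      KBFree (fun s t => eval s (f t) < 0) S T k b →
      (incidenceCount (fun s t => eval s (f t) < 0) S T : ℝ) ≤ K * (T.card + S.card) ∨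
      ∃ S' ⊂ S, 2 * S'.card ≤ S.card ∧ (incidenceCount (fun s t => eval s (f t) < 0) S T : ℝ) ≤
        K * (S.card ^ alpha k (Fintype.card ι) * T.card ^ beta k (Fintype.card ι) + S.card) +
          incidenceCount (fun s t => eval s (f t) < 0) S' T := by
  classical
  obtain ⟨K, hK, c, hc₀, hc₁, hsubset⟩ := exists_subset_incidenceCount_le ι β hk D b
  refine ⟨K * (c⁻¹ ^ (k - 1) + 1) + (k + b * c⁻¹ ^ (k - 1)), by positivity,
    fun S T f hS hD hsep hfree => ?_⟩
  set F : ℝ := S.card ^ alpha k (Fintype.card ι) * T.card ^ beta k (Fintype.card ι)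
  by_cases hST : (S.card : ℝ) ^ k ≤ T.card ∨ c * S.card ≤ 1
  · left
    exact (hfree.incidenceCount_le_linear hk hc₀ hc₁ hST).trans
      (mul_le_mul_of_nonneg_right (le_add_of_nonneg_left (by positivity)) (by positivity))
  push Not at hST
  obtain rfl | hT := T.eq_empty_or_nonempty
  · left
    rw [incidenceCount, Finset.sum_empty, Nat.cast_zero]
    positivity
  right
  have hS₀ : (0 : ℝ) < S.card := pos_of_mul_pos_right (by linarith [hST.2]) hc₀.le
  obtain ⟨P, hP, hPS, hPT, hPk⟩ := exists_balancing hk hι hc₀ hc₁ hST.2.le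
    (Nat.cast_pos.mpr hT.card_pos) hST.1.le
  obtain ⟨S', hS', hcard, hcount⟩ := hsubset S T f hS hD hsep hfree P hP hPS
  refine ⟨S \ S', Finset.sdiff_subset.ssubset_of_ne fun h => ?_, hcard, ?_⟩
  · rw [h] at hcard
    have : 0 < S.card := mod_cast hS₀
    omega
  rw [incidenceCount_eq_add_sdiff hS']
  push_cast
  gcongr
  calc _ ≤ K * (T.card * P ^ (1 - (Fintype.card ι : ℝ)⁻¹) +
        S.card * (S.card / P) ^ (k - 1) + S.card) := hcount
    _ ≤ K * (F + c⁻¹ ^ (k - 1) * (F + S.card) + S.card) := by gcongr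
    _ = K * (c⁻¹ ^ (k - 1) + 1) * (F + S.card) := by ring
    _ ≤ _ := by
        gcongr
        exact le_add_of_nonneg_right (by positivity)

lemma exists_incidenceCount_le_of_inGeneralPosition (hk : 0 < k) (hι : 2 ≤ Fintype.card ι)
    (D b : ℕ) :
    ∃ K : ℝ, 0 < K ∧ ∀ (S : Finset (ι → ℝ)) (T : Finset β) (f : β → MvPolynomial ι ℝ),
      InGeneralPosition S → (∀ t ∈ T, (f t).totalDegree ≤ D) →
      (∀ s ∈ S, ∀ t ∈ T, eval s (f t) < 0 ∨ 1 < eval s (f t)) →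
      KBFree (fun s t => eval s (f t) < 0) S T k b →
      (incidenceCount (fun s t => eval s (f t) < 0) S T : ℝ) ≤
        K * (S.card ^ alpha k (Fintype.card ι) * T.card ^ beta k (Fintype.card ι) + T.card +
          S.card) := by
  obtain ⟨K, hK, hstep⟩ := exists_incidenceCount_le_or_halving ι β hk hι D b
  obtain ⟨L, hKL, hdecay⟩ := exists_add_mul_le_of_two_mul_le (alpha_pos hk hι) hK.le
  have hL : 0 < L := hK.trans_le hKL
  refine ⟨L, hL, fun S T f hS hD hsep hfree => ?_⟩
  induction S using Finset.strongInduction with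
  | H S ih =>
    obtain hbase | ⟨S', hS', hcard, hcount⟩ := hstep S T f hS hD hsep hfree
    · refine hbase.trans ?_
      gcongr
      exact le_add_of_nonneg_left (by positivity)
    · have hrec := ih S' hS' (hS.mono hS'.subset) (fun s hs => hsep s (hS'.subset hs))
        (hfree.mono hS'.subset subset_rfl)
      exact hcount.trans <| (add_le_add_right hrec _).trans <|
        hdecay (by positivity) (by positivity) (mod_cast hcard)

end GeneralPositionBound

section Hypersurfaces

lemma KBFree.image {α α' β : Type*} [DecidableEq α'] {r : α → β → Prop} {r' : α' → β → Prop}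
    {S : Finset α} {T : Finset β} {k b : ℕ} {φ : α → α'} (h : KBFree r S T k b) (hφ : InjOn φ S)
    (hr : ∀ s ∈ S, ∀ t ∈ T, r' (φ s) t → r s t) : KBFree r' (S.image φ) T k b := by
  rintro ⟨P, B, hP, hB, hPk, hBb, hPB⟩
  obtain ⟨P, hPS, rfl⟩ := Finset.subset_image_iff.mp hP
  rw [Finset.card_image_of_injOn (hφ.mono hPS)] at hPk
  exact h ⟨P, B, hPS, hB, hPk, hBb, fun s hs t ht =>
    hr s (hPS hs) t (hB ht) (hPB _ (Finset.mem_image_of_mem φ hs) t ht)⟩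

lemma incidenceCount_image {α α' β : Type*} [DecidableEq α'] {r : α → β → Prop}
    {r' : α' → β → Prop} {S : Finset α} {T : Finset β} {φ : α → α'} (hφ : InjOn φ S)
    (hr : ∀ s ∈ S, ∀ t ∈ T, r' (φ s) t ↔ r s t) :
    incidenceCount r' (S.image φ) T = incidenceCount r S T := by
  classical
  refine Finset.sum_congr rfl fun t ht => ?_
  rw [Finset.filter_image, Finset.filter_congr fun s hs => hr s hs t ht,
    Finset.card_image_of_injOn (hφ.mono (Finset.filter_subset _ S))]

variable {ι β : Type*}

lemma exists_sign_separation (S : Finset (ι → ℝ)) (T : Finset β) {p : β → MvPolynomial ι ℝ}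
    {D : ℕ} (hp : ∀ t ∈ T, (p t).totalDegree ≤ D) :
    ∃ f : β → MvPolynomial ι ℝ, (∀ t ∈ T, (f t).totalDegree ≤ 2 * D) ∧
      ∀ s ∈ S, ∀ t ∈ T, (eval s (p t) = 0 → eval s (f t) < 0) ∧
        (eval s (p t) ≠ 0 → 1 < eval s (f t)) := by
  set M : ℝ := ∑ q ∈ S ×ˢ T, 3 / eval q.1 (p q.2) ^ 2
  refine ⟨fun t => C M * p t ^ 2 - C 1, fun t ht => ?_, fun s hs t ht => ⟨fun h => ?_, fun h => ?_⟩⟩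
  · refine (totalDegree_sub_C_le _ _).trans ((totalDegree_mul _ _).trans ?_)
    rw [totalDegree_C, zero_add]
    exact (totalDegree_pow _ _).trans (Nat.mul_le_mul_left 2 (hp t ht))
  · simp [h]
  · have hM : 3 / eval s (p t) ^ 2 ≤ M :=
      Finset.single_le_sum (f := fun q : (ι → ℝ) × β => 3 / eval q.1 (p q.2) ^ 2)
        (fun q _ => by positivity) (Finset.mk_mem_product hs ht)
    rw [div_le_iff₀ (by positivity)] at hM
    simp only [map_sub, map_mul, map_pow, eval_C]
    linarith

variable [Fintype ι] [Nonempty ι]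

/- Moving the points slightly preserves strict inequalities, so incidences with the sets `f < 0` can
be counted for points in general position. -/
lemma exists_perturbation [DecidableEq (ι → ℝ)] (S : Finset (ι → ℝ)) (T : Finset β)
    (f : β → MvPolynomial ι ℝ) :
    ∃ φ : (ι → ℝ) → ι → ℝ, InjOn φ S ∧ InGeneralPosition (S.image φ) ∧
      ∀ s, ∀ t ∈ T, (eval s (f t) < 0 → eval (φ s) (f t) < 0) ∧
        (1 < eval s (f t) → 1 < eval (φ s) (f t)) := by
  set U : (ι → ℝ) → Set (ι → ℝ) := fun s => ⋂ t ∈ T,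
    {x | (eval s (f t) < 0 → eval x (f t) < 0) ∧ (1 < eval s (f t) → 1 < eval x (f t))}
  have hopen (s : ι → ℝ) : IsOpen (U s) := by
    simp only [U, imp_iff_not_or]
    exact isOpen_biInter_finset fun t _ => IsOpen.inter
      (isOpen_const.union (isOpen_lt (MvPolynomial.continuous_eval _) continuous_const))
      (isOpen_const.union (isOpen_lt continuous_const (MvPolynomial.continuous_eval _)))
  obtain ⟨φ, hφU, hφ, hgp⟩ := exists_injOn_inGeneralPosition S hopen fun s =>
    ⟨s, by simp [U]⟩
  exact ⟨φ, hφ, hgp, fun s t ht => mem_iInter₂.mp (hφU s) t ht⟩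

variable (ι β) in
lemma exists_incidenceCount_le_of_iff_eval_eq_zero {k : ℕ} (hk : 0 < k) (hι : 2 ≤ Fintype.card ι)
    (D b : ℕ) :
    ∃ K : ℝ, 0 < K ∧ ∀ (S : Finset (ι → ℝ)) (T : Finset β) (r : (ι → ℝ) → β → Prop)
      (p : β → MvPolynomial ι ℝ), (∀ t ∈ T, (p t).totalDegree ≤ D) →
      (∀ s ∈ S, ∀ t ∈ T, r s t ↔ eval s (p t) = 0) → KBFree r S T k b →
      (incidenceCount r S T : ℝ) ≤
        K * (S.card ^ alpha k (Fintype.card ι) * T.card ^ beta k (Fintype.card ι) + T.card +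
          S.card) := by
  classical
  obtain ⟨K, hK, hbound⟩ :=
    exists_incidenceCount_le_of_inGeneralPosition ι β hk hι (2 * D) b
  refine ⟨K, hK, fun S T r p hD hr hfree => ?_⟩
  obtain ⟨f, hfD, hf⟩ := exists_sign_separation S T hD
  obtain ⟨φ, hφ, hgp, hφf⟩ := exists_perturbation S T f
  have hzero : ∀ s ∈ S, ∀ t ∈ T, r s t → eval (φ s) (f t) < 0 := fun s hs t ht h =>
    (hφf s t ht).1 ((hf s hs t ht).1 ((hr s hs t ht).mp h))
  have hnonzero : ∀ s ∈ S, ∀ t ∈ T, ¬ r s t → 1 < eval (φ s) (f t) := fun s hs t ht h =>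
    (hφf s t ht).2 ((hf s hs t ht).2 ((hr s hs t ht).not.mp h))
  have hiff : ∀ s ∈ S, ∀ t ∈ T, eval (φ s) (f t) < 0 ↔ r s t := fun s hs t ht =>
    ⟨fun h => by_contra fun h' => by linarith [hnonzero s hs t ht h'], hzero s hs t ht⟩
  have hsep : ∀ x ∈ S.image φ, ∀ t ∈ T, eval x (f t) < 0 ∨ 1 < eval x (f t) :=
    Finset.forall_mem_image.mpr fun s hs t ht =>
      (em (r s t)).imp (hzero s hs t ht) (hnonzero s hs t ht)
  have hfree' : KBFree (fun x t => eval x (f t) < 0) (S.image φ) T k b :=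
    hfree.image hφ fun s hs t ht => (hiff s hs t ht).mp
  have := hbound (S.image φ) T f hgp hfD hsep hfree'
  rwa [incidenceCount_image hφ hiff, Finset.card_image_of_injOn hφ] at this

open Classical in
lemma card_filter_eval_eq_zero_le {R : Type*} [CommRing R] [IsDomain R]
    {p : MvPolynomial (Fin 1) R} (hp : p ≠ 0) (S : Finset (Fin 1 → R)) :
    {s ∈ S | eval s p = 0}.card ≤ p.totalDegree := by
  obtain rfl | hS := S.eq_empty_or_nonempty
  · simp
  set A : Finset R := S.image fun s => s 0
  have hA : (0 : ℚ≥0) < A.card := Nat.cast_pos.mpr (hS.image _).card_pos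
  have hroots := schwartz_zippel_totalDegree hp A
  rw [pow_one, div_le_div_iff_of_pos_right hA, Nat.cast_le] at hroots
  refine (Finset.card_le_card (Finset.filter_subset_filter _ fun s hs => ?_)).trans hroots
  refine Fintype.mem_piFinset.mpr fun i => ?_
  rw [Subsingleton.elim i 0]
  exact Finset.mem_image_of_mem (fun s => s 0) hs

lemma incCountAbs_le_of_dim_one {T : Finset (Set (Fin 1 → ℝ))} {D : ℕ}
    (hT : ∀ t ∈ T, IsRealHypersurfaceDegLE 1 t D) (S : Finset (Fin 1 → ℝ)) :
    incCountAbs S T ≤ D * T.card := by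
  classical
  rw [incCountAbs_eq_incidenceCount, mul_comm, ← smul_eq_mul]
  refine Finset.sum_le_card_nsmul _ _ _ fun t ht => ?_
  obtain ⟨p, hp, rfl, hpD⟩ := hT t ht
  exact (card_filter_eval_eq_zero_le hp S).trans hpD

end Hypersurfaces

/-- Corollary 7 of the paper: incidences between a set of bounded-degree
hypersurfaces of `ℝⁿ` and a `(k, b)`-free set of points. -/
theorem statement6 (n k D b : ℕ) (hn : 0 < n) (hk : 0 < k) (hD : 0 < D) (hb : 0 < b) :
    ∃ C : ℝ, 0 < C ∧
      ∀ T : Finset (Set (Fin n → ℝ)), (∀ t ∈ T, IsRealHypersurfaceDegLE n t D) →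
        ∀ S : Finset (Fin n → ℝ), KBFree (fun s t => s ∈ t) S T k b →
          (incCountAbs S T : ℝ) ≤
            C * ((S.card : ℝ) ^ alpha k n * (T.card : ℝ) ^ beta k n
              + (T.card : ℝ) + (S.card : ℝ)) := by
  classical
  obtain rfl | hn₂ : n = 1 ∨ 2 ≤ n := by omega
  · refine ⟨D, mod_cast hD, fun T hT S _ => ?_⟩
    calc (incCountAbs S T : ℝ) ≤ D * T.card := mod_cast incCountAbs_le_of_dim_one hT S
      _ ≤ D * (S.card ^ alpha k 1 * T.card ^ beta k 1 + T.card + S.card) := by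
          gcongr
          rw [add_right_comm]
          exact le_add_of_nonneg_left (by positivity)
  · have : NeZero n := ⟨hn.ne'⟩
    obtain ⟨K, hK, hbound⟩ := exists_incidenceCount_le_of_iff_eval_eq_zero (Fin n)
      (Set (Fin n → ℝ)) hk (by rwa [Fintype.card_fin]) D b
    refine ⟨K, hK, fun T hT S hfree => ?_⟩
    choose! p _ hzero hdeg using hT
    rw [incCountAbs_eq_incidenceCount]
    simpa only [Fintype.card_fin] using hbound S T _ p hdeg
      (fun s _ t ht => Set.ext_iff.mp (hzero t ht) s) hfree

end Paper
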